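/- arXiv:1409.6712 — 11 statements merged into one kernel-verified Lean document; each statement's English description precedes it below -/
import Mathlib

section
/- Let S be a commutative semiring, let ι be a type, and let M = ι →₀ S be the free S-semimodule on ι. Then M is flat: for every pair of S-linear maps f, g : A → B between additive commutative monoids equipped with S-module structures, the canonical S-linear map Eq(f,g) ⊗[S] M → A ⊗[S] M induced by the inclusion of the submodule Eq(f,g) = {a ∈ A : f(a) = g(a)} is injective and its range equals {x ∈ A ⊗[S] M : (f ⊗ id)(x) = (g ⊗ id)(x)}. -/
/-!
There is an isomorphism `M ⊗[S] (ι →₀ S) ≃ (ι →₀ M)`, `TensorProduct.finsuppScalarRight`, and it is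
natural in `M`: it turns `φ ⊗ id` into coordinatewise application of `φ`
(`finsuppScalarRight_rTensor`). It therefore suffices that `M ↦ (ι →₀ M)` preserves equalizers.
This functor preserves injectivity, and a finitely supported family equalized coordinatewise by
`f` and `g` is a finitely supported family in the equalizer. No subtraction is needed.
-/

open TensorProduct

theorem finsuppScalarRight_rTensor {S ι M N : Type} [CommSemiring S] [DecidableEq ι]
    [AddCommMonoid M] [AddCommMonoid N] [Module S M] [Module S N] (φ : M →ₗ[S] N)
    (x : M ⊗[S] (ι →₀ S)) (i : ι) :
    TensorProduct.finsuppScalarRight S S N ι (LinearMap.rTensor (ι →₀ S) φ x) i =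
      φ (TensorProduct.finsuppScalarRight S S M ι x i) := by
  induction x with
  | zero => simp
  | tmul m p => simp
  | add x y hx hy => simp [hx, hy]

/-- the free `S`-semimodule `ι →₀ S` on a type `ι` over a commutative
semiring `S` is flat: tensoring with it preserves equalizers of pairs of `S`-linear
maps.  Concretely, for every pair of `S`-linear maps `f g : A → B` of `S`-semimodules,
the canonical map `Eq(f,g) ⊗[S] (ι →₀ S) → A ⊗[S] (ι →₀ S)` induced by the inclusion
of the equalizer submodule `Eq(f,g) = {a | f a = g a}` is injective, with range
exactly the equalizer `{x | (f ⊗ id) x = (g ⊗ id) x}`. -/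
theorem free_semimodule_flat (S : Type) [CommSemiring S] (ι : Type)
    (A B : Type) [AddCommMonoid A] [AddCommMonoid B] [Module S A] [Module S B]
    (f g : A →ₗ[S] B) :
    Function.Injective
      ⇑(LinearMap.rTensor (ι →₀ S) (LinearMap.eqLocus f g).subtype) ∧
    Set.range ⇑(LinearMap.rTensor (ι →₀ S) (LinearMap.eqLocus f g).subtype) =
      {x : A ⊗[S] (ι →₀ S) |
        LinearMap.rTensor (ι →₀ S) f x = LinearMap.rTensor (ι →₀ S) g x} := by
  classical
  refine ⟨fun x y hxy ↦ ?_, Set.Subset.antisymm ?_ fun x hx ↦ ?_⟩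
  · apply (TensorProduct.finsuppScalarRight S S (LinearMap.eqLocus f g) ι).injective
    ext i
    simpa only [finsuppScalarRight_rTensor, Submodule.subtype_apply] using
      DFunLike.congr_fun (congrArg (TensorProduct.finsuppScalarRight S S A ι) hxy) i
  · rintro _ ⟨y, rfl⟩
    apply (TensorProduct.finsuppScalarRight S S B ι).injective
    ext i
    simpa only [finsuppScalarRight_rTensor, Submodule.subtype_apply, LinearMap.mem_eqLocus] using
      (TensorProduct.finsuppScalarRight S S (LinearMap.eqLocus f g) ι y i).2
  · have hmem (i : ι) :
        TensorProduct.finsuppScalarRight S S A ι x i ∈ LinearMap.eqLocus f g := by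
      simpa only [finsuppScalarRight_rTensor, LinearMap.mem_eqLocus] using
        DFunLike.congr_fun (congrArg (TensorProduct.finsuppScalarRight S S B ι) hx) i
    let z : ι →₀ LinearMap.eqLocus f g :=
      Finsupp.onFinset (TensorProduct.finsuppScalarRight S S A ι x).support
        (fun i ↦ ⟨TensorProduct.finsuppScalarRight S S A ι x i, hmem i⟩)
        (fun i hi ↦ Finsupp.mem_support_iff.2 fun h ↦ hi (Subtype.ext h))
    refine ⟨(TensorProduct.finsuppScalarRight S S (LinearMap.eqLocus f g) ι).symm z, ?_⟩
    apply (TensorProduct.finsuppScalarRight S S A ι).injective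
    ext i
    rw [finsuppScalarRight_rTensor, LinearEquiv.apply_symm_apply]
    rfl
end

section
/- Let X be a digraph with vertex type V, edge type E and source and target maps s, t : E → V, and let v ∈ V. Let G ⊆ Ω_ℕ(v) consist of the elements χ_e for each self-loop e at v (i.e. s e = t e = v), together with the elements χ_a + χ_b for each pair of edges a, b with s a = v, t a ≠ v, t b = v, s b ≠ v. Then: (i) every element of Ω_ℕ(v) is a finite sum of elements of G; and (ii) every element g ∈ G is additively indecomposable in Ω_ℕ(v), i.e. whenever g = x + y with x, y ∈ Ω_ℕ(v), either x = 0 or y = 0. -/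
/-!
Call the common value of the outgoing and incoming sums of an element of `Ω_ℕ(v)` its degree.
A sum in `ℕ` is zero only if all its terms are, so an element of degree zero vanishes on every
edge incident to `v`, hence is zero (`eq_zero_of_degMap_eq_zero`); and every generator has
degree one (`degMap_source_generator`).

Indecomposability follows at once, as the degree is additive and `1` is not a sum of two positive
integers. For generation, an element of positive degree has an outgoing edge `a` and an incoming
edge `b` in its support; if one of these is a loop its indicator lies below the element, and
otherwise `a ≠ b` and `χ_a + χ_b` does (`exists_generator_add`). The remainder is again in
`Ω_ℕ(v)`, since addition in `ℕ` is cancellative, and has degree one less, so induction applies.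
-/

open scoped Classical in
/-- The `R`-linear map `(E →₀ M) →ₗ[R] M` summing the values of a finitely supported
function over the edges `e` with `s e = v` (`s` being either the source or the target
map of a digraph); on a generator `single e x` it gives `x` if `s e = v` and `0`
otherwise. -/
noncomputable def degMap (R : Type) [Semiring R] {V E : Type} (M : Type)
    [AddCommMonoid M] [Module R M] (s : E → V) (v : V) : (E →₀ M) →ₗ[R] M :=
  Finsupp.lsum ℕ fun e => if s e = v then (LinearMap.id : M →ₗ[R] M) else 0

/-- The `M`-valued orientation semimodule of the digraph `(V, E, s, t)` at a vertex
`v`: finitely supported functions `E →₀ M` vanishing on edges not incident to `v`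
and whose total value on edges with source `v` agrees with the total value on edges
with target `v`. -/
noncomputable def OmegaMod (R : Type) [Semiring R] {V E : Type} (M : Type)
    [AddCommMonoid M] [Module R M] (s t : E → V) (v : V) : Submodule R (E →₀ M) :=
  Finsupp.supported M R {e | s e = v ∨ t e = v} ⊓
    LinearMap.eqLocus (degMap R M s v) (degMap R M t v)

/-- The orientation semimodule `Ω_S(v)` of the digraph `(V, E, s, t)` over the
semiring `S` at the vertex `v`. -/
noncomputable def Omega (S : Type) [Semiring S] {V E : Type} (s t : E → V) (v : V) :
    Submodule S (E →₀ S) :=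
  OmegaMod S S s t v

/-- The generating set `G ⊆ Ω_ℕ(v)`: indicators `χ_e` of self-loops `e` at `v`,
together with sums `χ_a + χ_b` for `a` an outgoing non-loop edge and `b` an incoming
non-loop edge at `v`. -/
def orientationGenerators {V E : Type} (s t : E → V) (v : V) : Set (E →₀ ℕ) :=
  {g | (∃ e : E, s e = v ∧ t e = v ∧ g = Finsupp.single e 1) ∨
       (∃ a b : E, s a = v ∧ t a ≠ v ∧ t b = v ∧ s b ≠ v ∧
          g = Finsupp.single a 1 + Finsupp.single b 1)}

open scoped Classical in
theorem degMap_single {V E : Type} (s : E → V) (v : V) (e : E) (n : ℕ) :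
    degMap ℕ ℕ s v (Finsupp.single e n) = if s e = v then n else 0 := by
  unfold degMap
  rw [Finsupp.lsum_single]
  split_ifs <;> simp

theorem degMap_eq_zero_iff {V E : Type} (s : E → V) (v : V) (x : E →₀ ℕ) :
    degMap ℕ ℕ s v x = 0 ↔ ∀ e, s e = v → x e = 0 := by
  classical
  unfold degMap
  rw [Finsupp.lsum_apply, Finsupp.sum, Finset.sum_eq_zero_iff]
  constructor
  · intro h e he
    by_contra hx
    exact hx (by simpa [he] using h e (Finsupp.mem_support_iff.2 hx))
  · intro h e _
    by_cases he : s e = v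
    · simp [he, h e he]
    · simp [he]

theorem mem_Omega_iff {V E : Type} (s t : E → V) (v : V) (x : E →₀ ℕ) :
    x ∈ Omega ℕ s t v ↔
      (∀ e, x e ≠ 0 → s e = v ∨ t e = v) ∧ degMap ℕ ℕ s v x = degMap ℕ ℕ t v x := by
  unfold Omega OmegaMod
  rw [Submodule.mem_inf, LinearMap.mem_eqLocus, Finsupp.mem_supported]
  refine and_congr_left' ⟨fun h e he => h (by simpa using he), fun h e he => h e (by simpa using he)⟩

theorem eq_zero_of_degMap_eq_zero {V E : Type} {s t : E → V} {v : V} {x : E →₀ ℕ}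
    (hx : x ∈ Omega ℕ s t v) (h : degMap ℕ ℕ s v x = 0) : x = 0 := by
  rw [mem_Omega_iff] at hx
  have hs := (degMap_eq_zero_iff s v x).1 h
  have ht := (degMap_eq_zero_iff t v x).1 (hx.2 ▸ h)
  ext e
  by_contra he
  exact (hx.1 e he).elim (fun h' => he (hs e h')) (fun h' => he (ht e h'))

theorem degMap_source_generator {V E : Type} {s t : E → V} {v : V} {g : E →₀ ℕ}
    (hg : g ∈ orientationGenerators s t v) : degMap ℕ ℕ s v g = 1 := by
  rcases hg with ⟨e, hs, _, rfl⟩ | ⟨a, b, ha, _, _, hb, rfl⟩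
  · simp [degMap_single, hs]
  · simp [degMap_single, ha, hb]

theorem degMap_target_generator {V E : Type} {s t : E → V} {v : V} {g : E →₀ ℕ}
    (hg : g ∈ orientationGenerators s t v) : degMap ℕ ℕ t v g = 1 := by
  rcases hg with ⟨e, _, ht, rfl⟩ | ⟨a, b, _, ha, hb, _, rfl⟩
  · simp [degMap_single, ht]
  · simp [degMap_single, ha, hb]

/-- An element of `Ω_ℕ(v)` of positive degree splits off a generator inside `Ω_ℕ(v)`. -/
theorem exists_generator_add {V E : Type} {s t : E → V} {v : V} {x : E →₀ ℕ}
    (hx : x ∈ Omega ℕ s t v) (h : degMap ℕ ℕ s v x ≠ 0) :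
    ∃ g ∈ orientationGenerators s t v, ∃ y ∈ Omega ℕ s t v, x = g + y := by
  classical
  rw [mem_Omega_iff] at hx
  have h' : degMap ℕ ℕ t v x ≠ 0 := hx.2 ▸ h
  simp only [ne_eq, degMap_eq_zero_iff, not_forall] at h h'
  obtain ⟨a, ha, hxa⟩ := h
  obtain ⟨b, hb, hxb⟩ := h'
  obtain ⟨g, hg, hgx⟩ : ∃ g ∈ orientationGenerators s t v, g ≤ x := by
    by_cases hta : t a = v
    · exact ⟨_, Or.inl ⟨a, ha, hta, rfl⟩, by simpa [Nat.one_le_iff_ne_zero] using hxa⟩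
    by_cases hsb : s b = v
    · exact ⟨_, Or.inl ⟨b, hsb, hb, rfl⟩, by simpa [Nat.one_le_iff_ne_zero] using hxb⟩
    refine ⟨_, Or.inr ⟨a, b, ha, hta, hb, hsb, rfl⟩, fun e => ?_⟩
    have hab : a ≠ b := fun hab => hta (hab ▸ hb)
    simp only [Finsupp.add_apply, Finsupp.single_apply]
    split_ifs with h1 h2 h2
    · exact absurd (h1.trans h2.symm) hab
    · subst h1; omega
    · subst h2; omega
    · omega
  obtain ⟨y, rfl⟩ := exists_add_of_le hgx
  refine ⟨g, hg, y, (mem_Omega_iff s t v y).2 ⟨fun e he => hx.1 e ?_, ?_⟩, rfl⟩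
  · rw [Finsupp.add_apply]; omega
  · have := hx.2
    rw [map_add, map_add, degMap_source_generator hg, degMap_target_generator hg] at this
    omega

/-- (i) every element of `Ω_ℕ(v)` is a finite sum of elements of `G`,
and (ii) every element of `G` is additively indecomposable in `Ω_ℕ(v)`. -/
theorem orientation_generated_by_indecomposables (V E : Type) (s t : E → V) (v : V) :
    (∀ x ∈ Omega ℕ s t v, ∃ L : Multiset (E →₀ ℕ),
        (∀ g ∈ L, g ∈ orientationGenerators s t v) ∧ L.sum = x) ∧
    (∀ g ∈ orientationGenerators s t v,
        ∀ x ∈ Omega ℕ s t v, ∀ y ∈ Omega ℕ s t v, g = x + y → x = 0 ∨ y = 0) := by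
  constructor
  · intro x hx
    induction hn : degMap ℕ ℕ s v x generalizing x with
    | zero => exact ⟨0, by simp, by simp [eq_zero_of_degMap_eq_zero hx hn]⟩
    | succ n ih =>
      obtain ⟨g, hg, y, hy, rfl⟩ := exists_generator_add hx (by omega)
      rw [map_add, degMap_source_generator hg] at hn
      obtain ⟨L, hL, rfl⟩ := ih y hy (by omega)
      exact ⟨g ::ₘ L, by simpa [hg] using hL, by simp⟩
  · intro g hg x hx y hy h
    have hd := degMap_source_generator hg
    rw [h, map_add] at hd
    have h01 : degMap ℕ ℕ s v x = 0 ∨ degMap ℕ ℕ s v y = 0 := by omega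
    exact h01.imp (eq_zero_of_degMap_eq_zero hx) (eq_zero_of_degMap_eq_zero hy)
end

section
/- Let S be a semiring and let X be a digraph without self-loops (s e ≠ t e for all edges e) in which every vertex is the source of exactly one edge and the target of exactly one edge; for each vertex v let a_v denote the unique edge with s(a_v) = v and b_v the unique edge with t(b_v) = v. Then: (i) for every vertex v, the map S → Ω_S(v) sending λ to λ • (χ_{a_v} + χ_{b_v}) is an S-linear bijection; and (ii) for every edge e, evaluating at e sends the generator of each endpoint to 1, i.e. (χ_{a_{s e}} + χ_{b_{s e}})(e) = 1 and (χ_{a_{t e}} + χ_{b_{t e}})(e) = 1, so the coefficient-at-e restriction maps Ω_S(s e) → S and Ω_S(t e) → S carry generator to generator. -/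
theorem degMap_apply_of_unique {S V E : Type} [Semiring S] (s : E → V) (v : V) (c : E)
    (hc : ∀ e, s e = v ↔ e = c) (f : E →₀ S) : degMap S S s v f = f c := by
  classical
  induction f using Finsupp.induction_linear with
  | zero => simp
  | add f g hf hg => simp [hf, hg]
  | single e x =>
    by_cases h : e = c <;> simp [degMap, hc, h]

theorem mem_Omega_iff_of_unique {S V E : Type} [Semiring S] (s t : E → V) (v : V) (c d : E)
    (hc : ∀ e, s e = v ↔ e = c) (hd : ∀ e, t e = v ↔ e = d) (f : E →₀ S) :
    f ∈ Omega S s t v ↔ (∀ e, e ≠ c → e ≠ d → f e = 0) ∧ f c = f d := by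
  simp only [Omega, OmegaMod, Submodule.mem_inf, Finsupp.mem_supported', LinearMap.mem_eqLocus,
    degMap_apply_of_unique s v c hc, degMap_apply_of_unique t v d hd, Set.mem_ofPred_eq, hc, hd,
    not_or, and_imp]

/-- for a digraph with no self-loops in which every vertex is the
source of exactly one edge `a v` and the target of exactly one edge `b v`:
(i) for every vertex `v`, the `S`-linear map `λ ↦ λ • (χ_{a v} + χ_{b v})` is a
bijection from `S` onto `Ω_S(v)`; and (ii) for every edge `e`, the generators at
its two endpoints evaluate to `1` at `e`, so the coefficient-at-`e` restriction
maps carry generator to generator. -/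
theorem orientation_sheaf_constant_of_unique_in_out (S V E : Type) [Semiring S]
    (s t : E → V) (a b : V → E)
    (hnl : ∀ e : E, s e ≠ t e)
    (hsa : ∀ v : V, s (a v) = v) (hsa' : ∀ e : E, a (s e) = e)
    (htb : ∀ v : V, t (b v) = v) (htb' : ∀ e : E, b (t e) = e) :
    (∀ v : V,
      Function.Injective ⇑(LinearMap.toSpanSingleton S (E →₀ S)
        (Finsupp.single (a v) 1 + Finsupp.single (b v) 1)) ∧
      Set.range ⇑(LinearMap.toSpanSingleton S (E →₀ S)
        (Finsupp.single (a v) 1 + Finsupp.single (b v) 1)) = ↑(Omega S s t v)) ∧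
    (∀ e : E,
      (Finsupp.single (a (s e)) (1 : S) + Finsupp.single (b (s e)) (1 : S)) e = 1 ∧
      (Finsupp.single (a (t e)) (1 : S) + Finsupp.single (b (t e)) (1 : S)) e = 1) := by
  classical
  have hab : ∀ v, a v ≠ b v := fun v h => hnl (a v) (by rw [hsa, h, htb])
  refine ⟨fun v => ?_, fun e => ?_⟩
  · have hc : ∀ e, s e = v ↔ e = a v :=
      fun e => ⟨fun h => by rw [← h, hsa'], fun h => by rw [h, hsa]⟩
    have hd : ∀ e, t e = v ↔ e = b v :=
      fun e => ⟨fun h => by rw [← h, htb'], fun h => by rw [h, htb]⟩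
    constructor
    · intro x y hxy
      simpa [(hab v).symm] using DFunLike.congr_fun hxy (a v)
    · ext f
      rw [SetLike.mem_coe, mem_Omega_iff_of_unique s t v (a v) (b v) hc hd]
      constructor
      · rintro ⟨x, rfl⟩
        refine ⟨fun e ha hb => ?_, ?_⟩
        · simp [ha.symm, hb.symm]
        · simp [hab v, (hab v).symm]
      · rintro ⟨h0, h1⟩
        refine ⟨f (a v), ?_⟩
        ext e
        by_cases ha : e = a v
        · subst ha
          simp [(hab v).symm]
        · by_cases hb : e = b v
          · subst hb
            simp [hab v, h1]
          · simp [Ne.symm ha, Ne.symm hb, h0 e ha hb]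
  -- `e` is the outgoing edge at `s e` and the incoming edge at `t e`; in each case the
  -- other edge at that vertex differs from `e`, so its indicator contributes `0`.
  · have h1 : b (s e) ≠ e := fun h => hab (s e) (by rw [hsa', h])
    have h2 : a (t e) ≠ e := fun h => hab (t e) (by rw [htb', h])
    simp [hsa', htb', h1, h2]
end

section
/- Let R be a commutative ring and let X be a finite digraph without self-loops (s e ≠ t e for all edges e) in which every vertex v has total degree 2, i.e. |{e : s e = v}| + |{e : t e = v}| = 2. Then the orientation sheaf over R on X is constant: there exist R-linear bijections φ_v : Ω_R(v) → R for each vertex v and units u_e ∈ Rˣ for each edge e such that for every edge e, u_e • λ(e) = φ_{s e}(λ) for all λ ∈ Ω_R(s e), and u_e • λ(e) = φ_{t e}(λ) for all λ ∈ Ω_R(t e). -/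
/-- The union of two perfect matchings (given as involutions without fixed points) is bipartite.
The rotation `σ = β α` satisfies `α σ α = σ⁻¹`, and so `α x = σ ^ k x` would give a fixed point of
`α` (`k` even) or of `β` (`k` odd). Therefore `α` acts without fixed points on the `σ`-orbits,
and it suffices to select one orbit from each pair exchanged by `α`. -/
lemma exists_alternating {H : Type} (α β : H → H) (hα : ∀ x, α (α x) = x)
    (hβ : ∀ x, β (β x) = x) (nα : ∀ x, α x ≠ x) (nβ : ∀ x, β x ≠ x) :
    ∃ ε : H → Bool, (∀ x, ε (α x) = !ε x) ∧ ∀ x, ε (β x) = !ε x := by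
  classical
  let a : Equiv.Perm H := ⟨α, α, hα, hα⟩
  let b : Equiv.Perm H := ⟨β, β, hβ, hβ⟩
  have ha : a⁻¹ = a := rfl
  have hb : b⁻¹ = b := rfl
  have haa : a * a = 1 := Equiv.ext hα
  let σ : Equiv.Perm H := b * a
  have hconj : ∀ k : ℤ, a * σ ^ k = σ ^ (-k) * a := by
    intro k
    have h1 : a * σ * a⁻¹ = σ⁻¹ := by
      simp only [σ, mul_inv_rev, ha, hb, mul_assoc, haa, mul_one]
    have h2 : a * σ ^ k * a⁻¹ = σ ^ (-k) := by
      rw [← conj_zpow, h1, zpow_neg, inv_zpow]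
    rw [← h2, inv_mul_cancel_right]
  have hconj' : ∀ (k : ℤ) (x : H), α ((σ ^ k) x) = (σ ^ (-k)) (α x) := fun k x =>
    congrArg (fun f : Equiv.Perm H => f x) (hconj k)
  have hne : ∀ x, ¬ σ.SameCycle x (α x) := by
    rintro x ⟨k, hk⟩
    obtain ⟨m, rfl | rfl⟩ := Int.even_or_odd' k
    · apply nα ((σ ^ m) x)
      rw [hconj', ← hk, ← Equiv.Perm.mul_apply, ← zpow_add]
      congr 2; ring
    · apply nβ (α ((σ ^ m) x))
      change σ ((σ ^ m) x) = _
      rw [hconj', ← hk, ← Equiv.Perm.mul_apply, ← Equiv.Perm.mul_apply, ← zpow_add,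
        ← zpow_one_add]
      congr 2; ring
  let S := Equiv.Perm.SameCycle.setoid σ
  let A : Quotient S → Quotient S := Quotient.map α (by
    rintro x y ⟨k, rfl⟩
    exact ⟨-k, (hconj' k x).symm⟩)
  have hAA : ∀ q, A (A q) = q := by
    intro q
    induction q using Quotient.inductionOn with
    | h x => exact congrArg (Quotient.mk S) (hα x)
  have hA : ∀ q, A q ≠ q := by
    intro q
    induction q using Quotient.inductionOn with
    | h x => exact fun h => hne x (Quotient.exact h.symm)
  let : LinearOrder (Quotient S) := IsWellOrder.linearOrder WellOrderingRel
  let ε : H → Bool := fun x => decide ((Quotient.mk S x) < A (Quotient.mk S x))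
  have h1 : ∀ x, ε (α x) = !ε x := by
    intro x
    have e : Quotient.mk S (α x) = A (Quotient.mk S x) := rfl
    simp only [ε, e, hAA]
    rw [← decide_not, decide_eq_decide, not_lt]
    exact ⟨le_of_lt, fun h => lt_of_le_of_ne h (hA _)⟩
  refine ⟨ε, h1, fun x => ?_⟩
  have e : Quotient.mk S (β x) = Quotient.mk S (α x) := by
    refine (Quotient.sound (s := S) (a := α x) ⟨1, ?_⟩).symm
    change β (α (α x)) = β x
    rw [hα]
  rw [← h1]
  simp only [ε, e]

/-- The vertex carrying a half-edge: `(e, true)` is the source half of `e`. -/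
def halfEnd {V E : Type} (s t : E → V) (h : E × Bool) : V := if h.2 then s h.1 else t h.1

/-- The sign with which a half-edge enters the balance condition at its vertex. -/
def halfSign (R : Type) [CommRing R] (b : Bool) : R := if b then 1 else -1

lemma halfSign_mul_self (R : Type) [CommRing R] (b : Bool) :
    halfSign R b * halfSign R b = 1 := by
  cases b <;> simp [halfSign]

lemma halfSign_not (R : Type) [CommRing R] (b : Bool) : halfSign R (!b) = -halfSign R b := by
  cases b <;> simp [halfSign]

open scoped Classical in
lemma degMap_eq_sum (R V E : Type) [CommRing R] [Fintype E] (s : E → V) (v : V) (l : E →₀ R) :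
    degMap R R s v l = ∑ e, if s e = v then l e else 0 := by
  rw [degMap, Finsupp.lsum_apply, Finsupp.sum_fintype]
  · exact Finset.sum_congr rfl fun e _ => by split_ifs <;> simp
  · simp

/-- The orientation module as the functions supported on edges at `v` whose signed sum over the
half-edges at `v` vanishes. -/
lemma mem_Omega_iff_s8 (R V E : Type) [CommRing R] [Fintype E] [DecidableEq V] (s t : E → V) (v : V)
    (l : E →₀ R) :
    l ∈ Omega R s t v ↔ (∀ e, s e ≠ v → t e ≠ v → l e = 0) ∧
      ∑ h ∈ Finset.univ.filter (fun h => halfEnd s t h = v), halfSign R h.2 * l h.1 = 0 := by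
  classical
  have key : ∑ h ∈ Finset.univ.filter (fun h => halfEnd s t h = v), halfSign R h.2 * l h.1
      = degMap R R s v l - degMap R R t v l := by
    rw [degMap_eq_sum, degMap_eq_sum, Finset.sum_filter, Fintype.sum_prod_type,
      ← Finset.sum_sub_distrib]
    refine Finset.sum_congr rfl fun e _ => ?_
    simp only [Fintype.sum_bool, halfEnd, halfSign, if_true]
    split_ifs <;> simp_all
  rw [key, sub_eq_zero, Omega, OmegaMod, Submodule.mem_inf, LinearMap.mem_eqLocus,
    Finsupp.mem_supported']
  refine and_congr_left fun _ => forall_congr' fun e => ?_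
  simp only [Set.mem_ofPred_eq, not_or, and_imp, ne_eq]

/-- over a commutative ring `R`, the orientation sheaf of a finite
digraph without self-loops in which every vertex has total degree `2` is constant:
there are `R`-linear identifications `φ_v : Ω_R(v) ≃ R` and units `u_e` so that each
restriction map (evaluation of `λ ∈ Ω_R(v)` at an incident edge `e`, rescaled by
`u_e`) is identified with `φ_v`. -/
theorem orientation_sheaf_constant_of_total_degree_two (R V E : Type) [CommRing R]
    [Fintype V] [Fintype E] [DecidableEq V] (s t : E → V)
    (hnl : ∀ e : E, s e ≠ t e)
    (hdeg : ∀ v : V, (Finset.univ.filter fun e => s e = v).card +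
        (Finset.univ.filter fun e => t e = v).card = 2) :
    ∃ (φ : ∀ v : V, ↥(Omega R s t v) ≃ₗ[R] R) (u : E → Rˣ),
      ∀ e : E,
        (∀ l : ↥(Omega R s t (s e)), (u e : R) • ((l : E →₀ R) e) = φ (s e) l) ∧
        (∀ l : ↥(Omega R s t (t e)), (u e : R) • ((l : E →₀ R) e) = φ (t e) l) := by
  classical
  have hcard : ∀ v, (Finset.univ.filter fun h => halfEnd s t h = v).card = 2 := by
    intro v
    rw [← hdeg v, Finset.card_filter, Finset.card_filter, Finset.card_filter,
      Fintype.sum_prod_type, ← Finset.sum_add_distrib]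
    refine Finset.sum_congr rfl fun e _ => ?_
    simp only [Fintype.sum_bool, halfEnd, if_true, Bool.false_eq_true, if_false]
  have hother : ∀ h : E × Bool, ∃ h', h' ≠ h ∧
      Finset.univ.filter (fun k => halfEnd s t k = halfEnd s t h) = {h, h'} := by
    intro h
    obtain ⟨x, y, hxy, hs⟩ := Finset.card_eq_two.1 (hcard (halfEnd s t h))
    have hm : h ∈ ({x, y} : Finset (E × Bool)) := by rw [← hs]; simp
    rw [Finset.mem_insert, Finset.mem_singleton] at hm
    rcases hm with rfl | rfl
    · exact ⟨y, hxy.symm, hs⟩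
    · exact ⟨x, hxy, by rw [hs, Finset.pair_comm]⟩
  choose β hβne hβ using hother
  have hmem : ∀ h k, halfEnd s t k = halfEnd s t h ↔ k = h ∨ k = β h := by
    intro h k
    have := congrArg (k ∈ ·) (hβ h)
    simpa using this
  have hββ : ∀ h, β (β h) = h := by
    intro h
    have h1 := (hmem h (β h)).2 (Or.inr rfl)
    rcases (hmem (β h) h).1 h1.symm with h2 | h2
    · exact absurd h2.symm (hβne h)
    · exact h2.symm
  obtain ⟨ε, hεα, hεβ⟩ := exists_alternating (fun h : E × Bool => (h.1, !h.2)) β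
    (fun h => by simp) hββ (fun h hh => by simpa using congrArg Prod.snd hh) hβne
  let w : E → R := fun e => halfSign R (ε (e, true))
  have hww : ∀ e, w e * w e = 1 := fun e => halfSign_mul_self R _
  have hw : ∀ h : E × Bool, w h.1 = halfSign R h.2 * halfSign R (ε h) := by
    rintro ⟨e, b⟩
    cases b
    · have := hεα (e, true)
      simp only [Bool.not_true] at this
      change halfSign R _ = _
      rw [this, halfSign_not]
      rw [halfSign.eq_1 R false]
      simp
    · simp [w, halfSign]
  have hwβ : ∀ h, halfSign R (ε (β h)) = -halfSign R (ε h) := fun h => by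
    rw [hεβ, halfSign_not]
  have hbal : ∀ h (l : E →₀ R), l ∈ Omega R s t (halfEnd s t h) →
      halfSign R h.2 * l h.1 + halfSign R (β h).2 * l (β h).1 = 0 := by
    intro h l hl
    have := ((mem_Omega_iff_s8 R V E s t _ l).1 hl).2
    rwa [hβ h, Finset.sum_pair (hβne h).symm] at this
  have heq : ∀ h k (l : E →₀ R), l ∈ Omega R s t (halfEnd s t h) →
      halfEnd s t k = halfEnd s t h → w k.1 * l k.1 = w h.1 * l h.1 := by
    intro h k l hl hk
    rcases (hmem h k).1 hk with rfl | rfl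
    · rfl
    · rw [hw, hw h, hwβ]
      linear_combination -halfSign R (ε h) * hbal h l hl
  have hne : ∀ v, ∃ h, halfEnd s t h = v := by
    intro v
    have : (Finset.univ.filter fun h => halfEnd s t h = v).Nonempty := by
      rw [← Finset.card_pos, hcard]; norm_num
    obtain ⟨h, hh⟩ := this
    exact ⟨h, by simpa using hh⟩
  choose p hp using hne
  have hinc : ∀ e v, (s e = v ∨ t e = v) → ∃ b, halfEnd s t (e, b) = v := by
    rintro e v (h | h)
    · exact ⟨true, by simpa [halfEnd] using h⟩
    · exact ⟨false, by simpa [halfEnd] using h⟩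
  have hval : ∀ v e (l : E →₀ R), l ∈ Omega R s t v → (s e = v ∨ t e = v) →
      w e * l e = w (p v).1 * l (p v).1 := by
    intro v e l hl he
    obtain ⟨b, hb⟩ := hinc e v he
    exact heq (p v) (e, b) l (by rwa [hp]) (by rw [hp, hb])
  let f : ∀ v, ↥(Omega R s t v) →ₗ[R] R := fun v =>
    { toFun := fun l => w (p v).1 * (l : E →₀ R) (p v).1
      map_add' := fun l m => by simp [mul_add]
      map_smul' := fun r l => by simp [mul_left_comm] }
  have hf : ∀ v, Function.Bijective (f v) := by
    intro v
    constructor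
    · rw [injective_iff_map_eq_zero]
      rintro ⟨l, hl⟩ h0
      replace h0 : w (p v).1 * l (p v).1 = 0 := h0
      ext e
      change l e = 0
      by_cases he : s e = v ∨ t e = v
      · have := hval v e l hl he
        linear_combination w e * this + w e * h0 - l e * hww e
      · rw [not_or] at he
        exact ((mem_Omega_iff_s8 R V E s t v l).1 hl).1 e he.1 he.2
    · intro r
      let l : E →₀ R := Finsupp.equivFunOnFinite.symm
        fun e => if s e = v ∨ t e = v then w e * r else 0
      have hl : ∀ h, halfEnd s t h = v → l h.1 = w h.1 * r := by
        rintro ⟨e, b⟩ hh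
        have : s e = v ∨ t e = v := by
          cases b
          · exact Or.inr (by simpa [halfEnd] using hh)
          · exact Or.inl (by simpa [halfEnd] using hh)
        simp [l, this]
      have hlm : l ∈ Omega R s t v := by
        refine (mem_Omega_iff_s8 R V E s t v l).2 ⟨fun e h1 h2 => by simp [l, h1, h2], ?_⟩
        have h1 := hβ (p v)
        have h2 := (hmem (p v) (β (p v))).2 (Or.inr rfl)
        rw [hp] at h1 h2
        rw [h1, Finset.sum_pair (hβne _).symm, hl _ (hp v), hl _ h2, hw, hw (β (p v)), hwβ]
        linear_combination (halfSign R (ε (p v)) * r) * halfSign_mul_self R (p v).2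
          - (halfSign R (ε (p v)) * r) * halfSign_mul_self R (β (p v)).2
      refine ⟨⟨l, hlm⟩, ?_⟩
      change w (p v).1 * l (p v).1 = r
      rw [hl _ (hp v)]
      linear_combination r * hww (p v).1
  refine ⟨fun v => LinearEquiv.ofBijective (f v) (hf v),
    fun e => ⟨w e, w e, hww e, hww e⟩, fun e => ⟨fun l => ?_, fun l => ?_⟩⟩
  · exact hval _ e l l.2 (Or.inl rfl)
  · exact hval _ e l l.2 (Or.inr rfl)
end

section
/- Let S be a semiring, X a finite digraph, and F a cellular sheaf of S-semimodules on X. Then the map sending a section y ∈ H⁰(sd X; sd F) to the family (v ↦ y(inl v)) is an S-linear bijection from H⁰(sd X; sd F) onto H⁰(X; F). -/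
/-!
A section of `sd F` is determined by its restriction to the original vertices, because the
identity restriction maps force its value at `inr e` to be both `ρ⁻_e (y (inl (s e)))` and
`ρ⁺_e (y (inl (t e)))` (`mem_H0_sdSheaf_iff`). Eliminating that value leaves exactly the
section condition of `F` at `e`; hence restriction lands in `H⁰(X; F)`, is injective there, and
is inverted by setting `y (inr e) = ρ⁻_e (x (s e))`. No subtraction is used, so the argument
works over any semiring.
-/

/-- A cellular sheaf of `S`-semimodules on the digraph `(V, E, s, t)`: an
`S`-semimodule (additive commutative monoid with an `S`-module structure) for each
vertex and each edge, together with `S`-linear restriction maps from the stalk at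
the source, resp. target, of each edge to the stalk at that edge. -/
structure CellSheaf (S : Type) [Semiring S] (V E : Type) (s t : E → V) where
  FV : V → Type
  FE : E → Type
  [instFV : ∀ v, AddCommMonoid (FV v)]
  [instFE : ∀ e, AddCommMonoid (FE e)]
  [instMV : ∀ v, Module S (FV v)]
  [instME : ∀ e, Module S (FE e)]
  rneg : ∀ e, FV (s e) →ₗ[S] FE e
  rpos : ∀ e, FV (t e) →ₗ[S] FE e

attribute [instance] CellSheaf.instFV CellSheaf.instFE CellSheaf.instMV CellSheaf.instME

variable {S V E : Type} [Semiring S] {s t : E → V}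

/-- `H⁰(X; F)`: the submodule of families `x ∈ ∏_v F_V(v)` with
`ρ⁻_e (x (s e)) = ρ⁺_e (x (t e))` for every edge `e`. -/
def H0 (F : CellSheaf S V E s t) : Submodule S (∀ v, F.FV v) :=
  ⨅ e : E, LinearMap.eqLocus
    ((F.rneg e).comp (LinearMap.proj (s e)))
    ((F.rpos e).comp (LinearMap.proj (t e)))

theorem mem_H0_iff (F : CellSheaf S V E s t) (x : ∀ v, F.FV v) :
    x ∈ H0 F ↔ ∀ e, F.rneg e (x (s e)) = F.rpos e (x (t e)) := by
  simp [H0, LinearMap.eqLocus, Submodule.mem_iInf]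

/-- Transport of stalks along an equality of vertices. -/
def castLin (F : CellSheaf S V E s t) {v w : V} (h : v = w) :
    F.FV v →ₗ[S] F.FV w := by subst h; exact LinearMap.id

open scoped Classical in
/-- The `S`-linear map computing, at a vertex `v`, the sum `∑_{e : s e = v} (φ e).1`
of the source-components of a family `φ ∈ ∏_e F_V(s e) × F_V(t e)`. -/
noncomputable def inflowMap (F : CellSheaf S V E s t) [Fintype E] (v : V) :
    (∀ e, F.FV (s e) × F.FV (t e)) →ₗ[S] F.FV v :=
  ∑ e : E, if h : s e = v then
      (castLin F h).comp ((LinearMap.fst S (F.FV (s e)) (F.FV (t e))).comp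
        (LinearMap.proj e))
    else 0

open scoped Classical in
/-- The `S`-linear map computing, at a vertex `v`, the sum `∑_{e : t e = v} (φ e).2`
of the target-components of a family `φ ∈ ∏_e F_V(s e) × F_V(t e)`. -/
noncomputable def outflowMap (F : CellSheaf S V E s t) [Fintype E] (v : V) :
    (∀ e, F.FV (s e) × F.FV (t e)) →ₗ[S] F.FV v :=
  ∑ e : E, if h : t e = v then
      (castLin F h).comp ((LinearMap.snd S (F.FV (s e)) (F.FV (t e))).comp
        (LinearMap.proj e))
    else 0

/-- `Flows(X; F)`: the submodule of families `φ` with `φ e ∈ Γ(e)` (that is,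
`ρ⁻_e (φ e).1 = ρ⁺_e (φ e).2`) for every edge `e`, satisfying the conservation law
`∑_{e : s e = v} (φ e).1 = ∑_{e : t e = v} (φ e).2` at every vertex `v`. -/
noncomputable def Flows (F : CellSheaf S V E s t) [Fintype E] :
    Submodule S (∀ e, F.FV (s e) × F.FV (t e)) :=
  (⨅ e : E, LinearMap.eqLocus
      ((F.rneg e).comp ((LinearMap.fst S (F.FV (s e)) (F.FV (t e))).comp
        (LinearMap.proj e)))
      ((F.rpos e).comp ((LinearMap.snd S (F.FV (s e)) (F.FV (t e))).comp
        (LinearMap.proj e)))) ⊓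
  (⨅ v : V, LinearMap.eqLocus (inflowMap F v) (outflowMap F v))

/-- The source map of the subdivision `sd X`: the edge `(e, -)` runs from
`inl (s e)` to `inr e` and the edge `(e, +)` runs from `inr e` to `inl (t e)`. -/
def sdSrc (s : E → V) : E × Bool → V ⊕ E
  | (e, false) => Sum.inl (s e)
  | (e, _) => Sum.inr e

/-- The target map of the subdivision `sd X`. -/
def sdTgt (t : E → V) : E × Bool → V ⊕ E
  | (e, false) => Sum.inr e
  | (e, _) => Sum.inl (t e)

/-- Vertex stalks of the subdivided sheaf `sd F`. -/
def sdFV (F : CellSheaf S V E s t) : V ⊕ E → Type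
  | Sum.inl v => F.FV v
  | Sum.inr e => F.FE e

instance sdFVAddCommMonoid (F : CellSheaf S V E s t) : ∀ x, AddCommMonoid (sdFV F x)
  | Sum.inl v => F.instFV v
  | Sum.inr e => F.instFE e

instance sdFVModule (F : CellSheaf S V E s t) : ∀ x, Module S (sdFV F x)
  | Sum.inl v => F.instMV v
  | Sum.inr e => F.instME e

/-- The subdivided sheaf `sd F` on `sd X`: vertex `inl v` carries `F_V(v)`, vertex
`inr e` and both edges `(e, -)`, `(e, +)` carry `F_E(e)`; the restriction maps of
`(e, -)` are `ρ⁻_e` and the identity, those of `(e, +)` are the identity and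
`ρ⁺_e`. -/
def sdSheaf (F : CellSheaf S V E s t) :
    CellSheaf S (V ⊕ E) (E × Bool) (sdSrc s) (sdTgt t) where
  FV := sdFV F
  FE p := F.FE p.1
  rneg p := match p with
    | (e, false) => F.rneg e
    | (_, true) => LinearMap.id
  rpos p := match p with
    | (_, false) => LinearMap.id
    | (e, true) => F.rpos e

/-- The `S`-linear map restricting a family over the vertices of `sd X` to the
original vertices: `y ↦ (v ↦ y (inl v))`. -/
def resMap (F : CellSheaf S V E s t) : (∀ x, sdFV F x) →ₗ[S] (∀ v, F.FV v) where
  toFun y v := y (Sum.inl v)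
  map_add' _ _ := rfl
  map_smul' _ _ := rfl

/-- A family on the vertices of `sd X` is a section of `sd F` exactly when its value at each
edge-vertex `inr e` is the common image of its values at the two ends of `e`. -/
theorem mem_H0_sdSheaf_iff (F : CellSheaf S V E s t) (y : ∀ x, sdFV F x) :
    y ∈ H0 (sdSheaf F) ↔
      ∀ e, F.rneg e (y (Sum.inl (s e))) = y (Sum.inr e) ∧
        y (Sum.inr e) = F.rpos e (y (Sum.inl (t e))) := by
  refine (mem_H0_iff (sdSheaf F) y).trans ⟨fun h e => ⟨h (e, false), h (e, true)⟩, ?_⟩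
  rintro h ⟨e, _ | _⟩
  · exact (h e).1
  · exact (h e).2

/-- for a finite digraph `X` and a cellular sheaf `F` of
`S`-semimodules on `X`, the map `y ↦ (v ↦ y (inl v))` is an `S`-linear bijection
from `H⁰(sd X; sd F)` onto `H⁰(X; F)`. -/
theorem H0_subdivision_invariance [Fintype V] [Fintype E]
    (F : CellSheaf S V E s t) :
    Set.BijOn ⇑(resMap F) {y : ∀ x, sdFV F x | y ∈ H0 (sdSheaf F)} ↑(H0 F) := by
  refine ⟨fun y hy => ?_, fun y hy z hz hyz => ?_, fun x hx => ?_⟩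
  · have h := (mem_H0_sdSheaf_iff F y).1 hy
    exact (mem_H0_iff F _).2 fun e => (h e).1.trans (h e).2
  · have h := (mem_H0_sdSheaf_iff F y).1 hy
    have h' := (mem_H0_sdSheaf_iff F z).1 hz
    have hv : ∀ v, y (Sum.inl v) = z (Sum.inl v) := congrFun hyz
    funext a
    rcases a with v | e
    · exact hv v
    · rw [← (h e).1, ← (h' e).1, hv]
  · have h := (mem_H0_iff F x).1 hx
    -- The value at `inr e` is forced by the edge `(e, -)`; the section condition on `x`
    -- is what makes it compatible with `(e, +)` as well.
    let y : ∀ a, sdFV F a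
      | Sum.inl v => x v
      | Sum.inr e => F.rneg e (x (s e))
    exact ⟨y, (mem_H0_sdSheaf_iff F y).2 fun e => ⟨rfl, h e⟩, rfl⟩
end

section
/- Let S be a semiring, X a finite digraph, and F a cellular sheaf of S-semimodules on X. Let D⁻, D⁺ : (∏_v F_V(v)) → (∏_e F_E(e)) be the S-linear maps with D⁻(z)(e) = ρ⁻_e(z(s e)) and D⁺(z)(e) = ρ⁺_e(z(t e)), and let ≈_X be the additive congruence on ∏_e F_E(e) generated by all pairs (D⁻(z), D⁺(z)); define D⁻, D⁺ and ≈_{sd X} analogously for sd X and sd F. Then the additive monoid homomorphism η : ∏_{(e,σ) ∈ E × {−,+}} F_E(e) → ∏_e F_E(e) given by η(x)(e) = x(e,−) + x(e,+) carries ≈_{sd X}-related elements to ≈_X-related elements and induces an isomorphism of additive monoids from the quotient of ∏_{(e,σ)} F_E(e) by ≈_{sd X} onto the quotient of ∏_e F_E(e) by ≈_X; i.e. H¹(sd X; sd F) ≅ H¹(X; F). -/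
variable {S V E : Type} [Semiring S] {s t : E → V}

/-- The map `D⁻ : ∏_v F_V(v) → ∏_e F_E(e)`, `D⁻(z)(e) = ρ⁻_e (z (s e))`. -/
def Dneg (F : CellSheaf S V E s t) : (∀ v, F.FV v) → (∀ e, F.FE e) :=
  fun z e => F.rneg e (z (s e))

/-- The map `D⁺ : ∏_v F_V(v) → ∏_e F_E(e)`, `D⁺(z)(e) = ρ⁺_e (z (t e))`. -/
def Dpos (F : CellSheaf S V E s t) : (∀ v, F.FV v) → (∀ e, F.FE e) :=
  fun z e => F.rpos e (z (t e))

/-- The additive congruence on `∏_e F_E(e)` generated by the pairs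
`(D⁻(z), D⁺(z))`; its quotient is `H¹(X; F)`. -/
def coboundaryCon (F : CellSheaf S V E s t) : AddCon (∀ e, F.FE e) :=
  addConGen fun x y => ∃ z, x = Dneg F z ∧ y = Dpos F z

/-- The additive map `η : ∏_{(e,σ)} F_E(e) → ∏_e F_E(e)` given by
`η(x)(e) = x (e,−) + x (e,+)`. -/
def etaHom (F : CellSheaf S V E s t) :
    (∀ p : E × Bool, F.FE p.1) →+ (∀ e, F.FE e) where
  toFun x e := x (e, false) + x (e, true)
  map_zero' := by funext e; simp
  map_add' x y := by funext e; exact add_add_add_comm _ _ _ _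

/-- The section `(z, w)` of the vertex stalks of `sd F`. -/
def sdSection (F : CellSheaf S V E s t) (z : ∀ v, F.FV v) (w : ∀ e, F.FE e) :
    ∀ x, (sdSheaf F).FV x
  | Sum.inl v => z v
  | Sum.inr e => w e

/-- The element `(a, b)` of the edge product of `sd F`: `a` on the edges `(e, −)` and `b` on the
edges `(e, +)`. -/
def sdPair (F : CellSheaf S V E s t) (a b : ∀ e, F.FE e) : ∀ p, (sdSheaf F).FE p
  | (e, false) => a e
  | (e, true) => b e

/-- The section `ι y = (y, 0)` of `η`. -/
def iotaHom (F : CellSheaf S V E s t) : (∀ e, F.FE e) →+ (∀ p, (sdSheaf F).FE p) where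
  toFun y := sdPair F y 0
  map_zero' := by funext ⟨e, σ⟩; cases σ <;> rfl
  map_add' x y := by
    funext ⟨e, σ⟩
    cases σ
    · rfl
    · exact (add_zero (0 : F.FE e)).symm

theorem coboundaryCon_gen (F : CellSheaf S V E s t) (z : ∀ v, F.FV v) :
    coboundaryCon F (Dneg F z) (Dpos F z) :=
  AddConGen.Rel.of _ _ ⟨z, rfl, rfl⟩

theorem sd_gen (F : CellSheaf S V E s t) (z : ∀ v, F.FV v) (w : ∀ e, F.FE e) :
    coboundaryCon (sdSheaf F) (sdPair F (Dneg F z) w) (sdPair F w (Dpos F z)) := by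
  have h := coboundaryCon_gen (sdSheaf F) (sdSection F z w)
  have h1 : Dneg (sdSheaf F) (sdSection F z w) = sdPair F (Dneg F z) w := by
    funext ⟨e, σ⟩; cases σ <;> rfl
  have h2 : Dpos (sdSheaf F) (sdSection F z w) = sdPair F w (Dpos F z) := by
    funext ⟨e, σ⟩; cases σ <;> rfl
  rwa [h1, h2] at h

/-- A summand can be moved from the edges `(e, +)` to the edges `(e, −)`. -/
theorem sd_move (F : CellSheaf S V E s t) (w : ∀ e, F.FE e) :
    coboundaryCon (sdSheaf F) (sdPair F 0 w) (iotaHom F w) := by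
  have h := sd_gen F 0 w
  have h1 : Dneg F 0 = 0 := funext fun e => map_zero (F.rneg e)
  have h2 : Dpos F 0 = 0 := funext fun e => map_zero (F.rpos e)
  rwa [h1, h2] at h

theorem iota_eta (F : CellSheaf S V E s t) (x : ∀ p, (sdSheaf F).FE p) :
    coboundaryCon (sdSheaf F) x (iotaHom F (etaHom F x)) := by
  let a : ∀ e, F.FE e := fun e => x (e, false)
  let b : ∀ e, F.FE e := fun e => x (e, true)
  have hx : x = iotaHom F a + sdPair F 0 b := by
    funext ⟨e, σ⟩
    cases σ
    · exact (add_zero (a e)).symm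
    · exact (zero_add (b e)).symm
  have hη : etaHom F x = a + b := rfl
  rw [hη, map_add]
  conv_lhs => rw [hx]
  exact (coboundaryCon (sdSheaf F)).add ((coboundaryCon (sdSheaf F)).refl _) (sd_move F b)

theorem eta_iota (F : CellSheaf S V E s t) (y : ∀ e, F.FE e) : etaHom F (iotaHom F y) = y :=
  funext fun e => add_zero (y e)

theorem iota_rel (F : CellSheaf S V E s t) {x y : ∀ e, F.FE e} (h : coboundaryCon F x y) :
    coboundaryCon (sdSheaf F) (iotaHom F x) (iotaHom F y) := by
  have hle : coboundaryCon F ≤ (coboundaryCon (sdSheaf F)).comap (iotaHom F) (map_add _) := by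
    refine AddCon.addConGen_le.2 ?_
    rintro _ _ ⟨z, rfl, rfl⟩
    exact (coboundaryCon (sdSheaf F)).trans (sd_gen F z 0) (sd_move F (Dpos F z))
  exact hle h

theorem eta_rel (F : CellSheaf S V E s t) :
    coboundaryCon (sdSheaf F) ≤
      AddCon.ker ((AddCon.mk' (coboundaryCon F)).comp (etaHom F)) := by
  refine AddCon.addConGen_le.2 ?_
  rintro _ _ ⟨z, rfl, rfl⟩
  refine (AddCon.eq _).2 ?_
  let zV : ∀ v, F.FV v := fun v => z (Sum.inl v)
  let zE : ∀ e, F.FE e := fun e => z (Sum.inr e)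
  have h1 : etaHom F (Dneg (sdSheaf F) z) = Dneg F zV + zE := rfl
  have h2 : etaHom F (Dpos (sdSheaf F) z) = Dpos F zV + zE := funext fun e => add_comm _ _
  rw [h1, h2]
  exact (coboundaryCon F).add (coboundaryCon_gen F zV) ((coboundaryCon F).refl zE)

/-- the map `η` carries `≈_{sd X}`-related elements to `≈_X`-related
elements (the hypothesis `H`), and the induced additive monoid homomorphism on
quotients is an isomorphism `H¹(sd X; sd F) ≅ H¹(X; F)`. -/
theorem H1_subdivision_invariance [Fintype V] [Fintype E]
    (F : CellSheaf S V E s t) :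
    ∃ H : coboundaryCon (sdSheaf F) ≤
        AddCon.ker ((AddCon.mk' (coboundaryCon F)).comp (etaHom F)),
      Function.Bijective
        ⇑((coboundaryCon (sdSheaf F)).lift
            ((AddCon.mk' (coboundaryCon F)).comp (etaHom F)) H) := by
  refine ⟨eta_rel F, ?_, ?_⟩
  · intro p q
    refine AddCon.induction_on₂ p q fun x y h => ?_
    have hxy : coboundaryCon F (etaHom F x) (etaHom F y) := (AddCon.eq _).1 h
    let c := coboundaryCon (sdSheaf F)
    exact (AddCon.eq _).2
      (c.trans (iota_eta F x) (c.trans (iota_rel F hxy) (c.symm (iota_eta F y))))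
  · intro q
    refine AddCon.induction_on q fun y => ⟨AddCon.mk' _ (iotaHom F y), ?_⟩
    exact congrArg (AddCon.mk' (coboundaryCon F)) (eta_iota F y)
end

section
/- Let S be a semiring, X a finite digraph without self-loops (s e ≠ t e for all edges e), and F a cellular sheaf of S-semimodules on X. Then the map sending a flow ψ ∈ Flows(sd X; sd F) to the family (e ↦ ((ψ(e,−)).1, (ψ(e,+)).2)) is an S-linear bijection from Flows(sd X; sd F) onto Flows(X; F). -/
variable {S V E : Type} [Semiring S] {s t : E → V}

/-- The `S`-linear map sending a family over the edges of `sd X` to a family over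
the edges of `X`: `ψ ↦ (e ↦ ((ψ (e,−)).1, (ψ (e,+)).2))`. -/
def resFlow (F : CellSheaf S V E s t) :
    (∀ p : E × Bool, sdFV F (sdSrc s p) × sdFV F (sdTgt t p)) →ₗ[S]
      (∀ e, F.FV (s e) × F.FV (t e)) where
  toFun ψ e := ((ψ (e, false)).1, (ψ (e, true)).2)
  map_add' _ _ := rfl
  map_smul' _ _ := rfl

theorem mem_Flows_iff [Fintype E] (F : CellSheaf S V E s t)
    (φ : ∀ e, F.FV (s e) × F.FV (t e)) :
    φ ∈ Flows F ↔ (∀ e, F.rneg e (φ e).1 = F.rpos e (φ e).2) ∧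
      ∀ v, inflowMap F v φ = outflowMap F v φ := by
  simp [Flows, Submodule.mem_inf, Submodule.mem_iInf, LinearMap.mem_eqLocus]

open scoped Classical in
theorem inflowMap_apply [Fintype E] (F : CellSheaf S V E s t) (v : V)
    (φ : ∀ e, F.FV (s e) × F.FV (t e)) :
    inflowMap F v φ = ∑ e, if h : s e = v then castLin F h (φ e).1 else 0 := by
  rw [inflowMap, LinearMap.sum_apply]
  refine Finset.sum_congr rfl fun e _ => ?_
  split_ifs <;> rfl

open scoped Classical in
theorem outflowMap_apply [Fintype E] (F : CellSheaf S V E s t) (v : V)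
    (φ : ∀ e, F.FV (s e) × F.FV (t e)) :
    outflowMap F v φ = ∑ e, if h : t e = v then castLin F h (φ e).2 else 0 := by
  rw [outflowMap, LinearMap.sum_apply]
  refine Finset.sum_congr rfl fun e _ => ?_
  split_ifs <;> rfl

theorem castLin_sdSheaf_inl (F : CellSheaf S V E s t) {v w : V}
    (h : (Sum.inl v : V ⊕ E) = Sum.inl w) (h' : v = w) (x : F.FV v) :
    castLin (sdSheaf F) h x = castLin F h' x := by
  subst h'; rfl

theorem inflowMap_sdSheaf_inl [Fintype E] (F : CellSheaf S V E s t) (v : V)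
    (ψ : ∀ p : E × Bool, sdFV F (sdSrc s p) × sdFV F (sdTgt t p)) :
    inflowMap (sdSheaf F) (Sum.inl v) ψ = inflowMap F v (resFlow F ψ) := by
  classical
  -- The two sides agree as types only after unfolding `sdSheaf`, so `rw` cannot be used here.
  refine (inflowMap_apply (sdSheaf F) (Sum.inl v) ψ).trans
    (Eq.trans ?_ (inflowMap_apply F v (resFlow F ψ)).symm)
  refine (Fintype.sum_prod_type _).trans (Finset.sum_congr rfl fun e _ => ?_)
  refine (Fintype.sum_bool _).trans ?_
  refine (congrArg₂ (· + ·) (dif_neg (by simp [sdSrc])) rfl).trans ((zero_add _).trans ?_)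
  by_cases h : s e = v
  · refine (dif_pos (congrArg Sum.inl h)).trans (Eq.trans ?_ (dif_pos h).symm)
    exact castLin_sdSheaf_inl F _ h _
  · refine (dif_neg fun h' => h (Sum.inl.inj h')).trans (Eq.trans ?_ (dif_neg h).symm)
    rfl

theorem outflowMap_sdSheaf_inl [Fintype E] (F : CellSheaf S V E s t) (v : V)
    (ψ : ∀ p : E × Bool, sdFV F (sdSrc s p) × sdFV F (sdTgt t p)) :
    outflowMap (sdSheaf F) (Sum.inl v) ψ = outflowMap F v (resFlow F ψ) := by
  classical
  refine (outflowMap_apply (sdSheaf F) (Sum.inl v) ψ).trans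
    (Eq.trans ?_ (outflowMap_apply F v (resFlow F ψ)).symm)
  refine (Fintype.sum_prod_type _).trans (Finset.sum_congr rfl fun e _ => ?_)
  refine (Fintype.sum_bool _).trans ?_
  refine (congrArg₂ (· + ·) rfl (dif_neg (by simp [sdTgt]))).trans ((add_zero _).trans ?_)
  by_cases h : t e = v
  · refine (dif_pos (congrArg Sum.inl h)).trans (Eq.trans ?_ (dif_pos h).symm)
    exact castLin_sdSheaf_inl F _ h _
  · refine (dif_neg fun h' => h (Sum.inl.inj h')).trans (Eq.trans ?_ (dif_neg h).symm)
    rfl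

/-- The only edge of `sd X` with source `inr e` is `(e, +)`. -/
theorem inflowMap_sdSheaf_inr [Fintype E] (F : CellSheaf S V E s t) (e : E)
    (ψ : ∀ p : E × Bool, sdFV F (sdSrc s p) × sdFV F (sdTgt t p)) :
    inflowMap (sdSheaf F) (Sum.inr e) ψ = (ψ (e, true)).1 := by
  classical
  refine (inflowMap_apply (sdSheaf F) (Sum.inr e) ψ).trans
    ((Fintype.sum_eq_single (e, true) ?_).trans (dif_pos rfl))
  · rintro ⟨e', _ | _⟩ h
    · exact dif_neg (by simp [sdSrc])
    · exact dif_neg fun he => h (by rw [Sum.inr.inj he])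

/-- The only edge of `sd X` with target `inr e` is `(e, −)`. -/
theorem outflowMap_sdSheaf_inr [Fintype E] (F : CellSheaf S V E s t) (e : E)
    (ψ : ∀ p : E × Bool, sdFV F (sdSrc s p) × sdFV F (sdTgt t p)) :
    outflowMap (sdSheaf F) (Sum.inr e) ψ = (ψ (e, false)).2 := by
  classical
  refine (outflowMap_apply (sdSheaf F) (Sum.inr e) ψ).trans
    ((Fintype.sum_eq_single (e, false) ?_).trans (dif_pos rfl))
  · rintro ⟨e', _ | _⟩ h
    · exact dif_neg fun he => h (by rw [Sum.inr.inj he])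
    · exact dif_neg (by simp [sdTgt])

/-- A family on the subdivision is a flow iff its inner components are the images of the outer
ones under the restriction maps and its restriction to `X` is a flow. -/
theorem mem_Flows_sdSheaf_iff [Fintype E] (F : CellSheaf S V E s t)
    (ψ : ∀ p : E × Bool, sdFV F (sdSrc s p) × sdFV F (sdTgt t p)) :
    ψ ∈ Flows (sdSheaf F) ↔
      (∀ e, (ψ (e, false)).2 = F.rneg e (ψ (e, false)).1) ∧
      (∀ e, (ψ (e, true)).1 = F.rpos e (ψ (e, true)).2) ∧
      resFlow F ψ ∈ Flows F := by
  rw [mem_Flows_iff F]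
  refine (mem_Flows_iff (sdSheaf F) ψ).trans ⟨fun ⟨hE, hV⟩ => ?_, fun ⟨h₁, h₂, h₃, h₄⟩ => ?_⟩
  · have h₁ : ∀ e, (ψ (e, false)).2 = F.rneg e (ψ (e, false)).1 :=
      fun e => (hE (e, false)).symm
    have h₂ : ∀ e, (ψ (e, true)).1 = F.rpos e (ψ (e, true)).2 := fun e => hE (e, true)
    have hmid : ∀ e, (ψ (e, true)).1 = (ψ (e, false)).2 := fun e =>
      (inflowMap_sdSheaf_inr F e ψ).symm.trans
        ((hV (Sum.inr e)).trans (outflowMap_sdSheaf_inr F e ψ))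
    refine ⟨h₁, h₂, fun e => ?_, fun v => ?_⟩
    · exact (h₁ e).symm.trans ((hmid e).symm.trans (h₂ e))
    · exact (inflowMap_sdSheaf_inl F v ψ).symm.trans
        ((hV (Sum.inl v)).trans (outflowMap_sdSheaf_inl F v ψ))
  · refine ⟨?_, ?_⟩
    · rintro ⟨e, _ | _⟩
      · exact (h₁ e).symm
      · exact h₂ e
    · rintro (v | e)
      · exact (inflowMap_sdSheaf_inl F v ψ).trans
          ((h₄ v).trans (outflowMap_sdSheaf_inl F v ψ).symm)
      · exact (inflowMap_sdSheaf_inr F e ψ).trans ((h₂ e).trans ((h₃ e).symm.trans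
          ((h₁ e).symm.trans (outflowMap_sdSheaf_inr F e ψ).symm)))

/-- The extension of a family on `X` to the subdivision, with inner components given by the
restriction maps. -/
def extFlow (F : CellSheaf S V E s t) (φ : ∀ e, F.FV (s e) × F.FV (t e)) :
    ∀ p : E × Bool, sdFV F (sdSrc s p) × sdFV F (sdTgt t p)
  | (e, false) => ((φ e).1, F.rneg e (φ e).1)
  | (e, true) => (F.rpos e (φ e).2, (φ e).2)

/-- for a finite digraph `X` without self-loops and a cellular sheaf
`F` of `S`-semimodules on `X`, the map `ψ ↦ (e ↦ ((ψ (e,−)).1, (ψ (e,+)).2))` is an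
`S`-linear bijection from `Flows(sd X; sd F)` onto `Flows(X; F)`. -/
theorem flows_subdivision_invariance [Fintype V] [Fintype E]
    (F : CellSheaf S V E s t) (hnl : ∀ e : E, s e ≠ t e) :
    Set.BijOn ⇑(resFlow F)
      {ψ : ∀ p : E × Bool, sdFV F (sdSrc s p) × sdFV F (sdTgt t p) |
        ψ ∈ Flows (sdSheaf F)}
      ↑(Flows F) := by
  refine ⟨fun ψ hψ => ((mem_Flows_sdSheaf_iff F ψ).1 hψ).2.2, ?_, ?_⟩
  · intro ψ hψ χ hχ h
    obtain ⟨a₁, a₂, -⟩ := (mem_Flows_sdSheaf_iff F ψ).1 hψ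
    obtain ⟨b₁, b₂, -⟩ := (mem_Flows_sdSheaf_iff F χ).1 hχ
    funext ⟨e, b⟩
    have hs : (ψ (e, false)).1 = (χ (e, false)).1 := congrArg (fun φ => (φ e).1) h
    have ht : (ψ (e, true)).2 = (χ (e, true)).2 := congrArg (fun φ => (φ e).2) h
    cases b
    · exact Prod.ext hs ((a₁ e).trans ((congrArg (F.rneg e) hs).trans (b₁ e).symm))
    · exact Prod.ext ((a₂ e).trans ((congrArg (F.rpos e) ht).trans (b₂ e).symm)) ht
  · intro φ hφ
    exact ⟨extFlow F φ, (mem_Flows_sdSheaf_iff F _).2 ⟨fun _ => rfl, fun _ => rfl, hφ⟩, rfl⟩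
end

section
/- Let X be a finite digraph and let φ : E → ℕ satisfy the conservation law ∑_{e : s e = v} φ(e) = ∑_{e : t e = v} φ(e) at every vertex v. Then there exists a finite list L₁, …, L_k of simple directed loops of X (repetitions allowed) such that φ(e) = ∑_{i=1}^{k} (1 if e ∈ L_i else 0) for every edge e. -/
/-!
The proof is by strong induction on the total flow `∑ e, φ e`. If `φ ≠ 0`, conservation gives
each edge of the support a successor in the support, and the successor can be chosen to depend
only on the target vertex. The periodic points of the resulting self-map of the finite support
form a directed loop (`exists_loop_le_support`): on them the map is a bijection, so an edge is
determined both by its source and by its target. A minimal loop inside that one is simple. Its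
indicator is itself conserved (`IsDirectedLoop.conserved`) and is bounded by `φ`, so it can be
subtracted, leaving a conserved labelling with smaller total.
-/

/-- A directed loop in the digraph `(V, E, s, t)`: a nonempty set `L` of edges such
that every vertex incident to an edge of `L` is the source of exactly one edge of
`L` and the target of exactly one edge of `L`. -/
def IsDirectedLoop {V E : Type} (s t : E → V) (L : Set E) : Prop :=
  L.Nonempty ∧ ∀ v : V, (∃ e ∈ L, s e = v ∨ t e = v) →
    ((∃! e : E, e ∈ L ∧ s e = v) ∧ (∃! e : E, e ∈ L ∧ t e = v))

/-- A simple directed loop: a directed loop none of whose proper subsets is a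
directed loop. -/
def IsSimpleLoop {V E : Type} (s t : E → V) (L : Set E) : Prop :=
  IsDirectedLoop s t L ∧ ∀ L' ⊂ L, ¬ IsDirectedLoop s t L'

open Classical in
theorem IsDirectedLoop.conserved {V E : Type} [Fintype E] {s t : E → V} {L : Set E}
    (hL : IsDirectedLoop s t L) (v : V) :
    ∑ e ∈ Finset.univ.filter (fun e => s e = v), L.indicator (fun _ => (1 : ℕ)) e =
      ∑ e ∈ Finset.univ.filter (fun e => t e = v), L.indicator (fun _ => (1 : ℕ)) e := by
  have key : ∀ r : E → V, (∃! e, e ∈ L ∧ r e = v) →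
      ∑ e ∈ Finset.univ.filter (fun e => r e = v), L.indicator (fun _ => (1 : ℕ)) e = 1 := by
    rintro r ⟨a, ⟨haL, hav⟩, hu⟩
    rw [Finset.sum_eq_single a]
    · simp [haL]
    · intro b hb hba
      exact Set.indicator_of_notMem (fun hbL => hba (hu b ⟨hbL, by simpa using hb⟩)) _
    · simp [hav]
  by_cases h : ∃ e ∈ L, s e = v ∨ t e = v
  · obtain ⟨h1, h2⟩ := hL.2 v h
    rw [key s h1, key t h2]
  · push Not at h
    rw [Finset.sum_eq_zero, Finset.sum_eq_zero]
    · intro e he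
      exact Set.indicator_of_notMem (fun heL => (h e heL).2 (by simpa using he)) _
    · intro e he
      exact Set.indicator_of_notMem (fun heL => (h e heL).1 (by simpa using he)) _

theorem IsDirectedLoop.exists_simple {V E : Type} [Finite E] {s t : E → V} {L : Set E}
    (hL : IsDirectedLoop s t L) : ∃ L' ⊆ L, IsSimpleLoop s t L' := by
  obtain ⟨L', hle, hmin⟩ :=
    (Set.toFinite {L : Set E | IsDirectedLoop s t L}).exists_le_minimal hL
  exact ⟨L', hle, hmin.prop, fun L'' hlt h => hlt.2 (hmin.2 h hlt.1)⟩

theorem periodicPts_nonempty_of_finite {α : Type} [Finite α] [Nonempty α] (g : α → α) :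
    (Function.periodicPts g).Nonempty := by
  obtain ⟨x⟩ := ‹Nonempty α›
  obtain ⟨m, n, hmn, h⟩ : ∃ m n, m < n ∧ g^[m] x = g^[n] x := by
    obtain ⟨m, n, hne, h⟩ := Finite.exists_ne_map_eq_of_infinite (fun n : ℕ => g^[n] x)
    rcases lt_or_gt_of_ne hne with h' | h'
    · exact ⟨m, n, h', h⟩
    · exact ⟨n, m, h', h.symm⟩
  refine ⟨g^[m] x, n - m, by omega, ?_⟩
  rw [Function.IsPeriodicPt, Function.IsFixedPt, ← Function.iterate_add_apply,
    Nat.sub_add_cancel hmn.le, h]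

open Classical in
/-- The support of a nonzero conserved labelling contains a directed loop: the periodic edges of
a successor map that depends only on the target vertex. -/
theorem exists_loop_le_support {V E : Type} [Fintype E] {s t : E → V} {φ : E → ℕ}
    (hcons : ∀ v : V, ∑ e ∈ Finset.univ.filter (fun e => s e = v), φ e =
        ∑ e ∈ Finset.univ.filter (fun e => t e = v), φ e)
    (h0 : ∃ e, φ e ≠ 0) : ∃ L : Set E, IsDirectedLoop s t L ∧ ∀ e ∈ L, φ e ≠ 0 := by
  obtain ⟨e₀, he₀⟩ := h0
  have hsucc : ∀ e, φ e ≠ 0 → ∃ e', φ e' ≠ 0 ∧ s e' = t e := by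
    intro e he
    by_contra! hno
    have hz : ∑ e' ∈ Finset.univ.filter (fun e' => s e' = t e), φ e' = 0 :=
      Finset.sum_eq_zero fun e' he' => by
        by_contra hne
        exact hno e' hne (by simpa using he')
    rw [hcons, Finset.sum_eq_zero_iff] at hz
    exact he (hz e (by simp))
  have hchoice : ∀ v : V, ∃ e', (∃ e, φ e ≠ 0 ∧ s e = v) → φ e' ≠ 0 ∧ s e' = v := by
    intro v
    by_cases h : ∃ e, φ e ≠ 0 ∧ s e = v
    · exact h.imp fun _ he _ => he
    · exact ⟨e₀, fun h' => (h h').elim⟩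
  choose f hf using hchoice
  let g : {e // φ e ≠ 0} → {e // φ e ≠ 0} :=
    fun e => ⟨f (t e), (hf _ (hsucc e e.2)).1⟩
  have hs : ∀ e, s (g e) = t e := fun e => (hf _ (hsucc e e.2)).2
  have hg : ∀ e e' : {e // φ e ≠ 0}, t e = t e' → g e = g e' :=
    fun e e' h => Subtype.ext (congrArg f h)
  have : Nonempty {e // φ e ≠ 0} := ⟨⟨e₀, he₀⟩⟩
  have hbij := Function.bijOn_periodicPts g
  refine ⟨Subtype.val '' Function.periodicPts g,
    ⟨(periodicPts_nonempty_of_finite g).image _, ?_⟩, ?_⟩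
  · intro v hv
    -- Each vertex met by the loop is the target of some periodic edge `a`.
    obtain ⟨a, ha, rfl⟩ : ∃ a ∈ Function.periodicPts g, t a = v := by
      obtain ⟨_, ⟨b, hb, rfl⟩, h | h⟩ := hv
      · obtain ⟨a, ha, rfl⟩ := hbij.surjOn hb
        exact ⟨a, ha, (hs a).symm.trans h⟩
      · exact ⟨b, hb, h⟩
    refine ⟨⟨g a, ⟨⟨_, hbij.mapsTo ha, rfl⟩, hs a⟩, ?_⟩, ⟨a, ⟨⟨_, ha, rfl⟩, rfl⟩, ?_⟩⟩
    · rintro _ ⟨⟨b, hb, rfl⟩, h⟩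
      obtain ⟨c, hc, rfl⟩ := hbij.surjOn hb
      exact congrArg Subtype.val (hg c a ((hs c).symm.trans h))
    · rintro _ ⟨⟨b, hb, rfl⟩, h⟩
      exact congrArg Subtype.val (hbij.injOn hb ha (hg b a h))
  · rintro _ ⟨e, _, rfl⟩
    exact e.2

/-- every ℕ-valued flow (conservative edge labelling) on a finite
digraph decomposes as a finite sum of indicator functions of simple directed
loops. -/
theorem nat_flow_decomposes_into_simple_loops (V E : Type) [Fintype V] [Fintype E]
    [DecidableEq V] (s t : E → V) (φ : E → ℕ)
    (hcons : ∀ v : V, ∑ e ∈ Finset.univ.filter (fun e => s e = v), φ e =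
        ∑ e ∈ Finset.univ.filter (fun e => t e = v), φ e) :
    ∃ Ls : List (Set E), (∀ L ∈ Ls, IsSimpleLoop s t L) ∧
      ∀ e : E, φ e = (Ls.map fun L => L.indicator (fun _ => (1 : ℕ)) e).sum := by
  induction hn : ∑ e, φ e using Nat.strong_induction_on generalizing φ with
  | _ n ih =>
  by_cases h0 : ∃ e, φ e ≠ 0
  · obtain ⟨L₀, hL₀, hsupp⟩ := exists_loop_le_support (s := s) (t := t) (φ := φ)
      (fun v => by convert hcons v) h0
    obtain ⟨L, hLL₀, hL⟩ := hL₀.exists_simple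
    let χ : E → ℕ := L.indicator fun _ => 1
    -- `χ ≤ φ`, so the truncated subtraction `φ - χ` is an honest one.
    obtain ⟨ψ, hψ⟩ : ∃ ψ : E → ℕ, ∀ e, φ e = χ e + ψ e := by
      refine ⟨fun e => φ e - χ e, fun e => (Nat.add_sub_cancel' ?_).symm⟩
      by_cases he : e ∈ L
      · simpa [χ, he] using Nat.one_le_iff_ne_zero.2 (hsupp e (hLL₀ he))
      · simp [χ, he]
    have hψcons : ∀ v : V, ∑ e ∈ Finset.univ.filter (fun e => s e = v), ψ e =
        ∑ e ∈ Finset.univ.filter (fun e => t e = v), ψ e := by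
      intro v
      have h1 := hcons v
      have h2 : ∑ e ∈ Finset.univ.filter (fun e => s e = v), χ e =
          ∑ e ∈ Finset.univ.filter (fun e => t e = v), χ e := by
        convert hL.1.conserved v
      simp only [hψ, Finset.sum_add_distrib] at h1
      omega
    have hlt : ∑ e, ψ e < n := by
      obtain ⟨a, ha⟩ := hL.1.1
      rw [← hn]
      refine Finset.sum_lt_sum (fun e _ => by rw [hψ]; omega) ⟨a, Finset.mem_univ a, ?_⟩
      have : χ a = 1 := Set.indicator_of_mem ha _
      rw [hψ]
      omega
    obtain ⟨Ls, hLs, hsum⟩ := ih _ hlt ψ hψcons rfl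
    refine ⟨L :: Ls, by simpa using ⟨hL, hLs⟩, fun e => ?_⟩
    rw [hψ, hsum, List.map_cons, List.sum_cons]
  · push Not at h0
    exact ⟨[], by simp, by simpa using h0⟩
end

section
/- Let X be a finite digraph, let e₀ be an edge with s(e₀) ≠ t(e₀) such that X − e₀ is acyclic (no nonempty directed loop consists only of edges distinct from e₀), and let ω : E → ℕ be a capacity function. Call φ : E → ℕ an admissible flow if ∑_{e : s e = v} φ(e) = ∑_{e : t e = v} φ(e) for every vertex v and φ(c) ≤ ω(c) for every edge c ≠ e₀. Then the set {φ(e₀) : φ an admissible flow} has a greatest element, and this greatest element equals the minimum over all e₀-cuts C of ∑_{c ∈ C} ω(c); i.e. IsGreatest {n : ℕ | ∃ admissible flow φ, φ(e₀) = n} (sInf {∑_{c ∈ C} ω(c) | C an e₀-cut}). -/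
/-!
That a flow value never exceeds a cut capacity comes from summing the conservation law over the vertices of `A`
(`flow_le_cutCap`).

For the existence of a flow of value `k`, the minimal cut capacity, no augmenting paths are used.
Among all capacity functions `f ≤ ω` for which every cut still has capacity at least `k`, one with
minimal total capacity is chosen. Minimality forces every edge with `f e > 0` to belong to a
*tight* cut, that is, one of capacity exactly `k` (`exists_tight`). Cut capacity is submodular
(`cutCap_submodular`), so tight cuts are closed under intersection, and hence for every vertex `v`
with an outgoing edge in the support of `f` there is a smallest tight cut `B` containing `v`; all
edges of the support leaving `v` also leave `B` (`exists_tight_all_out`). If `v ≠ t e₀`, comparing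
`B` with `B \ {v}` gives `out v ≤ in v`; for `v = t e₀` tightness of `B` gives `out v ≤ k`.
Consequently, once the value `k` is placed on `e₀`, outflow is at most inflow at *every* vertex.
Both have the same total over all vertices, so equality holds everywhere, and `f` together with
`k` on `e₀` is a flow.
-/

section MaxFlow

variable {V E : Type} [Fintype E] [DecidableEq V]

/-- Capacity, with respect to `f`, of the set of edges leaving `A`. -/
def cutCap (s t : E → V) (f : E → ℕ) (A : Finset V) : ℕ :=
  ∑ c, if s c ∈ A ∧ t c ∉ A then f c else 0

theorem cutCap_submodular (s t : E → V) (f : E → ℕ) (A B : Finset V) :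
    cutCap s t f (A ∩ B) + cutCap s t f (A ∪ B) ≤ cutCap s t f A + cutCap s t f B := by
  unfold cutCap
  rw [← Finset.sum_add_distrib, ← Finset.sum_add_distrib]
  refine Finset.sum_le_sum fun e _ => ?_
  simp only [Finset.mem_inter, Finset.mem_union]
  by_cases h1 : s e ∈ A <;> by_cases h2 : s e ∈ B <;> by_cases h3 : t e ∈ A <;>
    by_cases h4 : t e ∈ B <;> simp [h1, h2, h3, h4]

/-- Weak duality: a conservative flow that obeys the capacities away from `e₀` sends
at most the capacity of the cut `A` through `e₀`. -/
theorem flow_le_cutCap (s t : E → V) (e₀ : E) (ω φ : E → ℕ) (A : Finset V)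
    (hT : t e₀ ∈ A) (hS : s e₀ ∉ A)
    (hcons : ∀ v : V, ∑ e ∈ Finset.univ.filter (fun e => s e = v), φ e =
      ∑ e ∈ Finset.univ.filter (fun e => t e = v), φ e)
    (hcap : ∀ c : E, c ≠ e₀ → φ c ≤ ω c) : φ e₀ ≤ cutCap s t ω A := by
  have hsum : ∀ r : E → V,
      ∑ v ∈ A, ∑ e ∈ Finset.univ.filter (fun e => r e = v), φ e =
        ∑ e, if r e ∈ A then φ e else 0 := by
    intro r
    simp only [Finset.sum_filter]
    rw [Finset.sum_comm]
    simp
  have hbal : (∑ e, if s e ∈ A then φ e else 0) = ∑ e, if t e ∈ A then φ e else 0 := by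
    rw [← hsum, ← hsum]
    exact Finset.sum_congr rfl fun v _ => hcons v
  have hin : φ e₀ ≤ ∑ e, if t e ∈ A ∧ s e ∉ A then φ e else 0 := by
    have := Finset.single_le_sum (f := fun e => if t e ∈ A ∧ s e ∉ A then φ e else 0)
      (fun _ _ => Nat.zero_le _) (Finset.mem_univ e₀)
    simpa [hT, hS] using this
  -- The edges inside `A` contribute equally to both sides of `hbal`.
  have h1 : (∑ e, if s e ∈ A then φ e else 0) =
      cutCap s t φ A + ∑ e, if s e ∈ A ∧ t e ∈ A then φ e else 0 := by
    unfold cutCap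
    rw [← Finset.sum_add_distrib]
    refine Finset.sum_congr rfl fun e _ => ?_
    by_cases a : s e ∈ A <;> by_cases b : t e ∈ A <;> simp [a, b]
  have h2 : (∑ e, if t e ∈ A then φ e else 0) =
      (∑ e, if t e ∈ A ∧ s e ∉ A then φ e else 0) +
        ∑ e, if s e ∈ A ∧ t e ∈ A then φ e else 0 := by
    rw [← Finset.sum_add_distrib]
    refine Finset.sum_congr rfl fun e _ => ?_
    by_cases a : s e ∈ A <;> by_cases b : t e ∈ A <;> simp [a, b]
  have h3 : cutCap s t φ A ≤ cutCap s t ω A := by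
    refine Finset.sum_le_sum fun e _ => ?_
    split_ifs with h
    · exact hcap e (by rintro rfl; exact hS h.1)
    · exact le_rfl
  omega

/-- `f` is feasible for `k` if every cut has capacity at least `k` with respect to `f`. -/
def CutsGe (s t : E → V) (e₀ : E) (k : ℕ) (f : E → ℕ) : Prop :=
  ∀ A : Finset V, t e₀ ∈ A → s e₀ ∉ A → k ≤ cutCap s t f A

/-- `A` is an `e₀`-cut whose capacity with respect to `f` is exactly `k`. -/
def Tight (s t : E → V) (e₀ : E) (k : ℕ) (f : E → ℕ) (A : Finset V) : Prop :=
  t e₀ ∈ A ∧ s e₀ ∉ A ∧ cutCap s t f A = k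

theorem Tight.inter {s t : E → V} {e₀ : E} {k : ℕ} {f : E → ℕ} {A B : Finset V}
    (hf : CutsGe s t e₀ k f) (hA : Tight s t e₀ k f A) (hB : Tight s t e₀ k f B) :
    Tight s t e₀ k f (A ∩ B) := by
  obtain ⟨a1, a2, a3⟩ := hA
  obtain ⟨b1, b2, b3⟩ := hB
  have hi := hf (A ∩ B) (by simp [a1, b1]) (by simp [a2])
  have hu := hf (A ∪ B) (by simp [a1]) (by simp [a2, b2])
  have := cutCap_submodular s t f A B
  exact ⟨by simp [a1, b1], by simp [a2], by omega⟩

/-- If no feasible `g ≤ f` has smaller total capacity than `f`, then every edge in the support of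
`f` belongs to a tight cut, since otherwise its capacity could be lowered by one. -/
theorem exists_tight {s t : E → V} {e₀ : E} {k : ℕ} {f : E → ℕ} (hf : CutsGe s t e₀ k f)
    (hmin : ∀ g : E → ℕ, g ≤ f → CutsGe s t e₀ k g → ∑ e, f e ≤ ∑ e, g e)
    {e : E} (he : 0 < f e) :
    ∃ A, Tight s t e₀ k f A ∧ s e ∈ A ∧ t e ∉ A := by
  classical
  by_contra! hno
  let g : E → ℕ := fun c => f c - if c = e then 1 else 0
  have hg : ∀ c, f c = g c + if c = e then 1 else 0 := by
    intro c
    by_cases h : c = e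
    · subst h; simp [g]; omega
    · simp [g, h]
  have hgf : g ≤ f := fun c => Nat.sub_le _ _
  have hcut : ∀ A, cutCap s t f A =
      cutCap s t g A + if s e ∈ A ∧ t e ∉ A then 1 else 0 := by
    intro A
    have : (if s e ∈ A ∧ t e ∉ A then 1 else 0) =
        ∑ c, if c = e then (if s c ∈ A ∧ t c ∉ A then 1 else 0) else 0 := by simp
    rw [this]
    unfold cutCap
    rw [← Finset.sum_add_distrib]
    refine Finset.sum_congr rfl fun c _ => ?_
    rw [hg c]
    split_ifs <;> simp
  have hgs : CutsGe s t e₀ k g := by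
    intro A hT hS
    have h1 := hf A hT hS
    have h2 := hcut A
    split_ifs at h2 with h
    · have : cutCap s t f A ≠ k := fun hk => h.2 (hno A ⟨hT, hS, hk⟩ h.1)
      omega
    · omega
  have h1 := hmin g hgf hgs
  have h2 : ∑ c, f c = ∑ c, g c + 1 := by
    rw [Finset.sum_congr rfl fun c _ => hg c, Finset.sum_add_distrib]
    simp
  omega

/-- The smallest tight cut containing `v` is left by all edges of the support that leave `v`. -/
theorem exists_tight_all_out {s t : E → V} {e₀ : E} {k : ℕ} {f : E → ℕ}
    (hf : CutsGe s t e₀ k f)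
    (hsupp : ∀ e, 0 < f e → ∃ A, Tight s t e₀ k f A ∧ s e ∈ A ∧ t e ∉ A)
    {v : V} (hv : ∃ e, 0 < f e ∧ s e = v) :
    ∃ B, Tight s t e₀ k f B ∧ v ∈ B ∧ ∀ e, 0 < f e → s e = v → t e ∉ B := by
  obtain ⟨e, he, rfl⟩ := hv
  obtain ⟨A, hA, hsA, -⟩ := hsupp e he
  obtain ⟨B, ⟨hB, hvB⟩, hBmin⟩ := (measure (Finset.card (α := V))).wf.has_min
    {B | Tight s t e₀ k f B ∧ s e ∈ B} ⟨A, hA, hsA⟩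
  refine ⟨B, hB, hvB, fun c hc hce htB => ?_⟩
  obtain ⟨C, hC, hsC, htC⟩ := hsupp c hc
  refine hBmin (B ∩ C) ⟨hB.inter hf hC, Finset.mem_inter.2 ⟨hvB, hce ▸ hsC⟩⟩ ?_
  refine Finset.card_lt_card (Finset.ssubset_iff_subset_ne.2 ⟨Finset.inter_subset_left, ?_⟩)
  intro h
  exact htC (Finset.mem_inter.1 (h ▸ htB)).2

/-- The outflow of `f` at `v` is at most its inflow together with the contribution of a value `k`
on `e₀` to the inflow. At vertices `v ≠ s e₀` the edge `e₀` contributes nothing to the outflow. -/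
theorem out_le_in {s t : E → V} {e₀ : E} {k : ℕ} {f : E → ℕ}
    (hf : CutsGe s t e₀ k f)
    (hsupp : ∀ e, 0 < f e → ∃ A, Tight s t e₀ k f A ∧ s e ∈ A ∧ t e ∉ A) (v : V) :
    (∑ e, if s e = v then f e else 0) ≤
      (∑ e, if t e = v then f e else 0) + if t e₀ = v then k else 0 := by
  by_cases hv : ∃ e, 0 < f e ∧ s e = v
  swap
  · push Not at hv
    rw [Finset.sum_eq_zero]
    · exact Nat.zero_le _
    · intro e _
      split_ifs with h
      · by_contra h0
        exact hv e (Nat.pos_of_ne_zero h0) h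
      · rfl
  obtain ⟨B, ⟨hT, hS, hk⟩, hvB, hout⟩ := exists_tight_all_out hf hsupp hv
  by_cases hvT : t e₀ = v
  · have : (∑ e, if s e = v then f e else 0) ≤ cutCap s t f B := by
      refine Finset.sum_le_sum fun e _ => ?_
      rcases Nat.eq_zero_or_pos (f e) with h0 | h0
      · simp [h0]
      by_cases h : s e = v
      · simp [h, hvB, hout e h0 h]
      · simp [h]
    simp only [hvT, if_true]
    omega
  · have h1 := hf (B.erase v) (by simp [hT, hvT]) (by simp [hS])
    have h2 : cutCap s t f (B.erase v) + (∑ e, if s e = v then f e else 0) ≤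
        cutCap s t f B + ∑ e, if t e = v then f e else 0 := by
      unfold cutCap
      rw [← Finset.sum_add_distrib, ← Finset.sum_add_distrib]
      refine Finset.sum_le_sum fun e _ => ?_
      rcases Nat.eq_zero_or_pos (f e) with h0 | h0
      · simp [h0]
      by_cases h : s e = v
      · simp [h, hvB, hout e h0 h]
      · by_cases h' : t e = v <;> by_cases a : s e ∈ B <;> by_cases b : t e ∈ B <;>
          simp_all
    omega

/-- Strong duality: if all cuts have capacity at least `k`, there is a flow with value `k`. -/
theorem exists_flow [Fintype V] (s t : E → V) (e₀ : E) (h₀ : s e₀ ≠ t e₀) (ω : E → ℕ) (k : ℕ)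
    (hω : CutsGe s t e₀ k ω) :
    ∃ φ : E → ℕ,
      (∀ v : V, ∑ e ∈ Finset.univ.filter (fun e => s e = v), φ e =
        ∑ e ∈ Finset.univ.filter (fun e => t e = v), φ e) ∧
      (∀ c : E, c ≠ e₀ → φ c ≤ ω c) ∧ φ e₀ = k := by
  classical
  obtain ⟨f, ⟨hfω, hf⟩, hfmin⟩ := (measure (fun f : E → ℕ => ∑ e, f e)).wf.has_min
    {f | f ≤ ω ∧ CutsGe s t e₀ k f} ⟨ω, le_rfl, hω⟩
  have hsupp : ∀ e, 0 < f e → ∃ A, Tight s t e₀ k f A ∧ s e ∈ A ∧ t e ∉ A :=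
    fun e he => exists_tight hf
      (fun g hgf hg => not_lt.1 (hfmin g ⟨hgf.trans hfω, hg⟩)) he
  -- An edge starting at `s e₀` belongs to no `e₀`-cut.
  have hS0 : ∀ e, s e = s e₀ → f e = 0 := by
    intro e he
    by_contra h
    obtain ⟨A, hA, hsA, -⟩ := hsupp e (Nat.pos_of_ne_zero h)
    exact hA.2.1 (he ▸ hsA)
  have hflow : ∀ (r : E → V) (v : V),
      ∑ e ∈ Finset.univ.filter (fun e => r e = v), (f e + if e = e₀ then k else 0) =
        (∑ e, if r e = v then f e else 0) + if r e₀ = v then k else 0 := by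
    intro r v
    rw [Finset.sum_add_distrib]
    simp [Finset.sum_filter]
  refine ⟨fun e => f e + if e = e₀ then k else 0, ?_, ?_, by simp [hS0 e₀ rfl]⟩
  · have hle : ∀ v ∈ (Finset.univ : Finset V),
        ∑ e ∈ Finset.univ.filter (fun e => s e = v), (f e + if e = e₀ then k else 0) ≤
          ∑ e ∈ Finset.univ.filter (fun e => t e = v), (f e + if e = e₀ then k else 0) := by
      intro v _
      rw [hflow, hflow]
      by_cases hv : s e₀ = v
      · subst hv
        have hz : (∑ e, if s e = s e₀ then f e else 0) = 0 := by
          refine Finset.sum_eq_zero fun e _ => ?_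
          split_ifs with h
          · exact hS0 e h
          · rfl
        -- The cut consisting of all vertices except `s e₀` bounds the inflow at `s e₀`.
        have h1 := hf (Finset.univ.erase (s e₀)) (by simp [h₀.symm]) (by simp)
        have h2 : cutCap s t f (Finset.univ.erase (s e₀)) ≤
            ∑ e, if t e = s e₀ then f e else 0 := by
          refine Finset.sum_le_sum fun e _ => ?_
          by_cases a : s e = s e₀ <;> by_cases b : t e = s e₀ <;> simp [a, b]
        simp only [hz, if_true]
        omega
      · simp only [hv, if_false, add_zero]
        exact out_le_in hf hsupp v
    have htot : ∀ r : E → V,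
        ∑ v, ∑ e ∈ Finset.univ.filter (fun e => r e = v), (f e + if e = e₀ then k else 0) =
          ∑ e, (f e + if e = e₀ then k else 0) :=
      fun r => Finset.sum_fiberwise _ _ _
    intro v
    exact (Finset.sum_eq_sum_iff_of_le hle).1 ((htot s).trans (htot t).symm) v
      (Finset.mem_univ v)
  · intro c hc
    simpa [hc] using hfω c

end MaxFlow


/-- integral max-flow min-cut: for a finite digraph `X`, a
distinguished non-loop edge `e₀` such that `X − e₀` is acyclic, and ℕ-valued
capacities `ω`, the set of values `φ(e₀)` of admissible flows `φ` (conservative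
everywhere and capacity-bounded away from `e₀`) has a greatest element, namely the
minimum of the capacities `∑_{c ∈ C} ω c` over all `e₀`-cuts `C`. -/
theorem integral_max_flow_min_cut (V E : Type) [Fintype V] [Fintype E]
    [DecidableEq V] (s t : E → V) (e₀ : E) (h₀ : s e₀ ≠ t e₀)
    (hacyc : ¬ ∃ L : Set E, IsDirectedLoop s t L ∧ e₀ ∉ L)
    (ω : E → ℕ) :
    IsGreatest
      {n : ℕ | ∃ φ : E → ℕ,
        (∀ v : V, ∑ e ∈ Finset.univ.filter (fun e => s e = v), φ e =
            ∑ e ∈ Finset.univ.filter (fun e => t e = v), φ e) ∧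
        (∀ c : E, c ≠ e₀ → φ c ≤ ω c) ∧ φ e₀ = n}
      (sInf {m : ℕ | ∃ A : Finset V, t e₀ ∈ A ∧ s e₀ ∉ A ∧
        m = ∑ c ∈ Finset.univ.filter (fun c => s c ∈ A ∧ t c ∉ A), ω c}) := by
  have hcut : ∀ A : Finset V, ∑ c ∈ Finset.univ.filter (fun c => s c ∈ A ∧ t c ∉ A), ω c =
      cutCap s t ω A := fun A => Finset.sum_filter _ _
  simp only [hcut]
  constructor
  · refine exists_flow s t e₀ h₀ ω _ fun A hT hS => ?_
    exact Nat.sInf_le ⟨A, hT, hS, rfl⟩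
  · rintro n ⟨φ, hcons, hcap, rfl⟩
    obtain ⟨A, hT, hS, hA⟩ := Nat.sInf_mem
      (s := {m : ℕ | ∃ A : Finset V, t e₀ ∈ A ∧ s e₀ ∉ A ∧ m = cutCap s t ω A})
      ⟨_, {t e₀}, by simp, by simp [h₀], rfl⟩
    rw [hA]
    exact flow_le_cutCap s t e₀ ω φ A hT hS hcons hcap
end

section
/- Let X be a finite digraph, let e₀ be an edge with s(e₀) ≠ t(e₀) such that X − e₀ is acyclic (no nonempty directed loop consists only of edges distinct from e₀), and let ω : E → ℝ≥0 be a capacity function with values in the nonnegative reals. Call φ : E → ℝ≥0 an admissible flow if ∑_{e : s e = v} φ(e) = ∑_{e : t e = v} φ(e) for every vertex v and φ(c) ≤ ω(c) for every edge c ≠ e₀. Then the set {φ(e₀) : φ an admissible flow} has a greatest element, and this greatest element equals the minimum over all e₀-cuts C of ∑_{c ∈ C} ω(c); i.e. IsGreatest {x : ℝ≥0 | ∃ admissible flow φ, φ(e₀) = x} (sInf {∑_{c ∈ C} ω(c) | C an e₀-cut}). -/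
namespace MaxFlow

open Classical Filter Topology

variable {V E : Type} [Fintype E] (s t : E → V)

/-- The net outflow of `φ` at the vertex `v`. -/
noncomputable def net (φ : E → ℝ) (v : V) : ℝ :=
  ∑ e, φ e * ((if s e = v then 1 else 0) - (if t e = v then 1 else 0))

/-- Real-valued admissible flows. -/
def flows (e₀ : E) (ω : E → NNReal) : Set (E → ℝ) :=
  {φ | (∀ v, net s t φ v = 0) ∧ (∀ e, 0 ≤ φ e) ∧ ∀ e, e ≠ e₀ → φ e ≤ ω e}

/-- The capacity of the set of edges leaving `A`. -/
noncomputable def cutCap (ω : E → NNReal) (A : Finset V) : ℝ :=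
  ∑ e, if s e ∈ A ∧ t e ∉ A then (ω e : ℝ) else 0

variable {s t}

lemma net_add (φ ψ : E → ℝ) (v : V) : net s t (φ + ψ) v = net s t φ v + net s t ψ v := by
  simp [net, add_mul, Finset.sum_add_distrib]

lemma net_smul (c : ℝ) (φ : E → ℝ) (v : V) : net s t (c • φ) v = c * net s t φ v := by
  simp [net, mul_assoc, Finset.mul_sum]

lemma net_single (e : E) (c : ℝ) (v : V) :
    net s t (Pi.single e c) v
      = c * ((if s e = v then 1 else 0) - (if t e = v then 1 else 0)) := by
  rw [net, Finset.sum_eq_single e]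
  · simp
  · intro b _ hb
    simp [hb]
  · simp

lemma sum_net (φ : E → ℝ) (A : Finset V) :
    ∑ v ∈ A, net s t φ v
      = ∑ e, φ e * ((if s e ∈ A then 1 else 0) - (if t e ∈ A then 1 else 0)) := by
  unfold net
  rw [Finset.sum_comm]
  refine Finset.sum_congr rfl fun e _ => ?_
  rw [← Finset.mul_sum, Finset.sum_sub_distrib]
  simp

lemma cut_sub_eq (ω : E → NNReal) (A : Finset V) (e₀ : E) (x : ℝ) :
    cutCap s t ω A - x
      = ∑ e, ((if s e ∈ A ∧ t e ∉ A then (ω e : ℝ) else 0) - (if e = e₀ then x else 0)) := by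
  rw [Finset.sum_sub_distrib]
  simp [cutCap]

/-- Weak duality. -/
lemma flow_le_cut {e₀ : E} {ω : E → NNReal} {φ : E → ℝ} (hφ : φ ∈ flows s t e₀ ω)
    {A : Finset V} (ht : t e₀ ∈ A) (hs : s e₀ ∉ A) : φ e₀ ≤ cutCap s t ω A := by
  obtain ⟨h1, h2, h3⟩ := hφ
  have h := sum_net (s := s) (t := t) φ A
  rw [Finset.sum_eq_zero fun v _ => h1 v] at h
  rw [← sub_nonneg, cut_sub_eq ω A e₀]
  refine h.trans_le (Finset.sum_le_sum fun e _ => ?_)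
  have := h2 e
  by_cases he : e = e₀
  · subst he
    simp [ht, hs]
  · have := h3 e he
    by_cases a : s e ∈ A <;> by_cases b : t e ∈ A <;> simp [a, b, he] <;> assumption

/-- Complementary slackness. -/
lemma flow_eq_cut {e₀ : E} {ω : E → NNReal} {φ : E → ℝ} (hφ : φ ∈ flows s t e₀ ω)
    {A : Finset V} (ht : t e₀ ∈ A) (hs : s e₀ ∉ A)
    (hout : ∀ e, e ≠ e₀ → s e ∈ A → t e ∉ A → φ e = ω e)
    (hin : ∀ e, e ≠ e₀ → s e ∉ A → t e ∈ A → φ e = 0) : φ e₀ = cutCap s t ω A := by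
  have h := sum_net (s := s) (t := t) φ A
  rw [Finset.sum_eq_zero fun v _ => hφ.1 v] at h
  symm
  rw [← sub_eq_zero, cut_sub_eq ω A e₀]
  symm
  refine h.trans (Finset.sum_congr rfl fun e _ => ?_)
  by_cases he : e = e₀
  · subst he
    simp [ht, hs]
  · have ho := hout e he
    have hi := hin e he
    by_cases a : s e ∈ A <;> by_cases b : t e ∈ A <;> simp [a, b, he] <;> tauto

lemma exists_max (e₀ : E) (h₀ : s e₀ ≠ t e₀) (ω : E → NNReal) :
    ∃ φ ∈ flows s t e₀ ω, ∀ ψ ∈ flows s t e₀ ω, ψ e₀ ≤ φ e₀ := by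
  have hcl : IsClosed (flows s t e₀ ω) := by
    have : flows s t e₀ ω = (⋂ v, {φ | net s t φ v = 0}) ∩ ((⋂ e, {φ | 0 ≤ φ e}) ∩
        ⋂ e, ⋂ (_ : e ≠ e₀), {φ | φ e ≤ ω e}) := by
      ext φ
      simp [flows]
    rw [this]
    refine (isClosed_iInter fun v => isClosed_eq ?_ continuous_const).inter
      ((isClosed_iInter fun e => isClosed_le continuous_const (continuous_apply e)).inter
      (isClosed_iInter fun e => isClosed_iInter fun _ =>
        isClosed_le (continuous_apply e) continuous_const))
    unfold net
    fun_prop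
  -- The flow through `e₀` is bounded by the cut at the single vertex `t e₀`.
  have hsub : flows s t e₀ ω ⊆
      Set.Icc 0 (fun e => if e = e₀ then cutCap s t ω {t e₀} else (ω e : ℝ)) := by
    intro φ hφ
    refine ⟨fun e => hφ.2.1 e, fun e => ?_⟩
    by_cases he : e = e₀
    · subst he
      simpa using flow_le_cut hφ (A := {t e}) (by simp) (by simpa using h₀)
    · simpa [he] using hφ.2.2 e he
  have hc : IsCompact (flows s t e₀ ω) := isCompact_Icc.of_isClosed_subset hcl hsub
  have hne : (flows s t e₀ ω).Nonempty := ⟨0, by simp [flows, net]⟩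
  obtain ⟨φ, hφ, hm⟩ := hc.exists_isMaxOn hne (continuous_apply e₀).continuousOn
  exact ⟨φ, hφ, fun ψ hψ => hm hψ⟩

/-- One step in the residual graph of `φ`: along an unsaturated edge, or backwards along an edge
carrying positive flow; the edge `e₀` is not used. -/
def Residual (s t : E → V) (e₀ : E) (ω : E → NNReal) (φ : E → ℝ) (u v : V) : Prop :=
  ∃ e, e ≠ e₀ ∧ ((s e = u ∧ t e = v ∧ φ e < ω e) ∨ (t e = u ∧ s e = v ∧ 0 < φ e))

/-- A residual walk from `u` to `v` yields an infinitesimally admissible direction that carries one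
unit from `u` to `v`. -/
lemma exists_direction {e₀ : E} {ω : E → NNReal} {φ : E → ℝ} {u v : V}
    (h : Relation.ReflTransGen (Residual s t e₀ ω φ) u v) :
    ∃ d : E → ℝ, d e₀ = 0 ∧
      (∀ w, net s t d w = (if u = w then 1 else 0) - (if v = w then 1 else 0)) ∧
      ∀ e, e ≠ e₀ → (φ e ≤ 0 → 0 ≤ d e) ∧ (ω e ≤ φ e → d e ≤ 0) := by
  induction h with
  | refl => exact ⟨0, by simp [net]⟩
  | tail _ hr ih =>
    obtain ⟨d, hd0, hdn, hdc⟩ := ih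
    obtain ⟨e, he, ⟨rfl, rfl, hlt⟩ | ⟨rfl, rfl, hlt⟩⟩ := hr
    · refine ⟨d + Pi.single e 1, by simp [hd0, he.symm], fun w => ?_, fun f hf => ?_⟩
      · rw [net_add, hdn, net_single]
        ring
      · obtain ⟨h1, h2⟩ := hdc f hf
        by_cases hfe : f = e
        · subst hfe
          exact ⟨fun h => by have := h1 h; simp; linarith, fun h => absurd hlt (not_lt.2 h)⟩
        · simpa [hfe] using ⟨h1, h2⟩
    · refine ⟨d + Pi.single e (-1), by simp [hd0, he.symm], fun w => ?_, fun f hf => ?_⟩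
      · rw [net_add, hdn, net_single]
        ring
      · obtain ⟨h1, h2⟩ := hdc f hf
        by_cases hfe : f = e
        · subst hfe
          exact ⟨fun h => absurd hlt (not_lt.2 h), fun h => by have := h2 h; simp; linarith⟩
        · simpa [hfe] using ⟨h1, h2⟩

/-- A nonnegativity constraint satisfied at `a` survives a small step in direction `b`, provided `b`
does not decrease it when it is tight. -/
lemma eventually_nonneg {a b : ℝ} (ha : 0 ≤ a) (hb : a ≤ 0 → 0 ≤ b) :
    ∀ᶠ ε in 𝓝[>] (0 : ℝ), 0 ≤ a + ε * b := by
  rcases ha.eq_or_lt with rfl | ha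
  · filter_upwards [self_mem_nhdsWithin] with ε hε
    have := mul_nonneg (le_of_lt hε) (hb le_rfl)
    linarith
  · have hc : Tendsto (fun ε : ℝ => a + ε * b) (𝓝[>] 0) (𝓝 (a + 0 * b)) :=
      (Continuous.tendsto (by fun_prop) 0).mono_left nhdsWithin_le_nhds
    filter_upwards [hc.eventually (lt_mem_nhds (show 0 < a + 0 * b by simpa))] with ε hε
    exact hε.le

lemma not_reachable_of_max {e₀ : E} {ω : E → NNReal} {φ : E → ℝ} (hφ : φ ∈ flows s t e₀ ω)
    (hm : ∀ ψ ∈ flows s t e₀ ω, ψ e₀ ≤ φ e₀) :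
    ¬ Relation.ReflTransGen (Residual s t e₀ ω φ) (t e₀) (s e₀) := by
  intro h
  obtain ⟨d, hd0, hdn, hdc⟩ := exists_direction h
  -- One unit through `e₀` closes the direction up to a circulation.
  set δ : E → ℝ := d + Pi.single e₀ 1 with hδ
  have hδ_zero : δ e₀ = 1 := by simp [hδ, hd0]
  have hδ_ne : ∀ e, e ≠ e₀ → δ e = d e := fun e he => by simp [hδ, he]
  have hδ_net : ∀ w, net s t δ w = 0 := fun w => by
    rw [hδ, net_add, hdn, net_single]
    ring
  have hlow : ∀ᶠ ε in 𝓝[>] (0 : ℝ), ∀ e, 0 ≤ φ e + ε * δ e := by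
    refine eventually_all.2 fun e => eventually_nonneg (hφ.2.1 e) fun h => ?_
    by_cases he : e = e₀
    · simp [he, hδ_zero]
    · rw [hδ_ne e he]
      exact (hdc e he).1 h
  have hup : ∀ᶠ ε in 𝓝[>] (0 : ℝ), ∀ e, e ≠ e₀ → 0 ≤ (ω e - φ e) + ε * (-δ e) := by
    refine eventually_all.2 fun e => eventually_imp_distrib_left.2 fun he =>
      eventually_nonneg (sub_nonneg.2 (hφ.2.2 e he)) fun h => ?_
    rw [hδ_ne e he]
    linarith [(hdc e he).2 (by linarith)]
  obtain ⟨ε, ⟨h1, h2⟩, hε⟩ := ((hlow.and hup).and self_mem_nhdsWithin).exists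
  have hε : 0 < ε := hε
  have := hm (φ + ε • δ) ⟨fun v => by rw [net_add, net_smul, hφ.1, hδ_net]; simp,
    fun e => by simpa using h1 e, fun e he => by
      have := h2 e he
      simp only [Pi.add_apply, Pi.smul_apply, smul_eq_mul]
      linarith⟩
  simp [hδ_zero] at this
  linarith

/-- Strong duality for real-valued flows. -/
lemma exists_flow_eq_cut [Fintype V] (e₀ : E) (h₀ : s e₀ ≠ t e₀) (ω : E → NNReal) :
    ∃ φ ∈ flows s t e₀ ω, ∃ A : Finset V, t e₀ ∈ A ∧ s e₀ ∉ A ∧ φ e₀ = cutCap s t ω A := by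
  obtain ⟨φ, hφ, hm⟩ := exists_max e₀ h₀ ω
  let A : Finset V :=
    Finset.univ.filter fun v => Relation.ReflTransGen (Residual s t e₀ ω φ) (t e₀) v
  have hA : ∀ v, v ∈ A ↔ Relation.ReflTransGen (Residual s t e₀ ω φ) (t e₀) v := by simp [A]
  have ht : t e₀ ∈ A := (hA _).2 .refl
  have hs : s e₀ ∉ A := fun h => not_reachable_of_max hφ hm ((hA _).1 h)
  refine ⟨φ, hφ, A, ht, hs, flow_eq_cut hφ ht hs (fun e he h1 h2 => ?_) fun e he h1 h2 => ?_⟩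
  · by_contra hne
    exact h2 ((hA _).2 (((hA _).1 h1).tail
      ⟨e, he, .inl ⟨rfl, rfl, lt_of_le_of_ne (hφ.2.2 e he) hne⟩⟩))
  · by_contra hne
    exact h1 ((hA _).2 (((hA _).1 h2).tail
      ⟨e, he, .inr ⟨rfl, rfl, lt_of_le_of_ne (hφ.2.1 e) (Ne.symm hne)⟩⟩))

lemma net_eq_sub [DecidableEq V] (φ : E → ℝ) (v : V) :
    net s t φ v = ∑ e ∈ Finset.univ.filter (fun e => s e = v), φ e
      - ∑ e ∈ Finset.univ.filter (fun e => t e = v), φ e := by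
  simp [net, mul_sub, Finset.sum_filter]

lemma coe_mem_flows [DecidableEq V] {e₀ : E} {ω φ : E → NNReal} :
    (fun e => (φ e : ℝ)) ∈ flows s t e₀ ω ↔
      (∀ v : V, ∑ e ∈ Finset.univ.filter (fun e => s e = v), φ e =
        ∑ e ∈ Finset.univ.filter (fun e => t e = v), φ e) ∧ ∀ c : E, c ≠ e₀ → φ c ≤ ω c := by
  simp only [flows, Set.mem_ofPred_eq, net_eq_sub, sub_eq_zero, NNReal.coe_nonneg, implies_true,
    true_and, NNReal.coe_le_coe]
  norm_cast

lemma cutCap_eq [DecidableEq V] (ω : E → NNReal) (A : Finset V) :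
    cutCap s t ω A
      = ((∑ c ∈ Finset.univ.filter (fun c => s c ∈ A ∧ t c ∉ A), ω c : NNReal) : ℝ) := by
  rw [cutCap, NNReal.coe_sum, Finset.sum_filter]
  refine Finset.sum_congr rfl fun e _ => ?_
  congr

end MaxFlow


/-- real-valued max-flow min-cut: for a finite digraph `X`, a
distinguished non-loop edge `e₀` such that `X − e₀` is acyclic, and capacities `ω` valued in the nonnegative reals, the set of values `φ(e₀)` of admissible flows `φ` (conservative
everywhere and capacity-bounded away from `e₀`) has a greatest element, namely the
minimum of the capacities `∑_{c ∈ C} ω c` over all `e₀`-cuts `C`. -/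
theorem nnreal_max_flow_min_cut (V E : Type) [Fintype V] [Fintype E]
    [DecidableEq V] (s t : E → V) (e₀ : E) (h₀ : s e₀ ≠ t e₀)
    (hacyc : ¬ ∃ L : Set E, IsDirectedLoop s t L ∧ e₀ ∉ L)
    (ω : E → NNReal) :
    IsGreatest
      {x : NNReal | ∃ φ : E → NNReal,
        (∀ v : V, ∑ e ∈ Finset.univ.filter (fun e => s e = v), φ e =
            ∑ e ∈ Finset.univ.filter (fun e => t e = v), φ e) ∧
        (∀ c : E, c ≠ e₀ → φ c ≤ ω c) ∧ φ e₀ = x}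
      (sInf {m : NNReal | ∃ A : Finset V, t e₀ ∈ A ∧ s e₀ ∉ A ∧
        m = ∑ c ∈ Finset.univ.filter (fun c => s c ∈ A ∧ t c ∉ A), ω c}) := by
  have hweak : ∀ φ : E → NNReal, (fun e => (φ e : ℝ)) ∈ MaxFlow.flows s t e₀ ω →
      ∀ A : Finset V, t e₀ ∈ A → s e₀ ∉ A →
        φ e₀ ≤ ∑ c ∈ Finset.univ.filter (fun c => s c ∈ A ∧ t c ∉ A), ω c := by
    intro φ hφ A ht hs
    have := MaxFlow.flow_le_cut hφ ht hs
    rw [MaxFlow.cutCap_eq] at this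
    exact_mod_cast this
  obtain ⟨ψ, hψ, A, ht, hs, hA⟩ := MaxFlow.exists_flow_eq_cut e₀ h₀ ω
  lift ψ to E → NNReal using hψ.2.1
  rw [MaxFlow.cutCap_eq] at hA
  have hA_eq : ψ e₀ = ∑ c ∈ Finset.univ.filter (fun c => s c ∈ A ∧ t c ∉ A), ω c := by
    exact NNReal.coe_injective hA
  have hleast : IsLeast {m : NNReal | ∃ A : Finset V, t e₀ ∈ A ∧ s e₀ ∉ A ∧
      m = ∑ c ∈ Finset.univ.filter (fun c => s c ∈ A ∧ t c ∉ A), ω c} (ψ e₀) := by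
    refine ⟨⟨A, ht, hs, hA_eq⟩, ?_⟩
    rintro m ⟨B, htB, hsB, rfl⟩
    exact hweak ψ hψ B htB hsB
  rw [hleast.csInf_eq]
  obtain ⟨hcons, hcap⟩ := MaxFlow.coe_mem_flows.1 hψ
  refine ⟨⟨ψ, hcons, hcap, rfl⟩, ?_⟩
  rintro x ⟨φ, h1, h2, rfl⟩
  rw [hA_eq]
  exact hweak φ (MaxFlow.coe_mem_flows.2 ⟨h1, h2⟩) A ht hs
end

section
/- Let S be a commutative semiring, X a finite digraph without self-loops (s e ≠ t e for all edges e), F a cellular sheaf of S-semimodules on X, and M a flat S-semimodule. Let F ⊗ M be the cellular sheaf with vertex stalks F_V(v) ⊗[S] M, edge stalks F_E(e) ⊗[S] M, and restriction maps ρ⁻_e ⊗ id and ρ⁺_e ⊗ id. Then the canonical S-linear map Flows(X;F) ⊗[S] M → Flows(X; F ⊗ M), determined on pure tensors by sending φ ⊗ m to the family (e ↦ ((φ(e)).1 ⊗ m, (φ(e)).2 ⊗ m)), is bijective. -/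
variable {S V E : Type} [Semiring S] {s t : E → V}

open TensorProduct

section UCT
variable {S V E : Type} [CommSemiring S] {s t : E → V}

/-- The cellular sheaf `F ⊗ M`: stalkwise tensor product with `M`, with restriction
maps `ρ⁻_e ⊗ id` and `ρ⁺_e ⊗ id`. -/
noncomputable def tensorSheaf (F : CellSheaf S V E s t) (M : Type)
    [AddCommMonoid M] [Module S M] : CellSheaf S V E s t where
  FV v := F.FV v ⊗[S] M
  FE e := F.FE e ⊗[S] M
  rneg e := LinearMap.rTensor M (F.rneg e)
  rpos e := LinearMap.rTensor M (F.rpos e)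

/-- The `S`-linear projection `Flows(X;F) → F_V(s e)`, `φ ↦ (φ e).1`. -/
noncomputable def flowProjFst (F : CellSheaf S V E s t) [Fintype E] (e : E) :
    ↥(Flows F) →ₗ[S] F.FV (s e) :=
  (LinearMap.fst S (F.FV (s e)) (F.FV (t e))).comp
    ((LinearMap.proj e).comp (Flows F).subtype)

/-- The `S`-linear projection `Flows(X;F) → F_V(t e)`, `φ ↦ (φ e).2`. -/
noncomputable def flowProjSnd (F : CellSheaf S V E s t) [Fintype E] (e : E) :
    ↥(Flows F) →ₗ[S] F.FV (t e) :=
  (LinearMap.snd S (F.FV (s e)) (F.FV (t e))).comp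
    ((LinearMap.proj e).comp (Flows F).subtype)

/-- The canonical `S`-linear comparison map
`Flows(X;F) ⊗[S] M → ∏_e (F_V(s e) ⊗ M) × (F_V(t e) ⊗ M)`, determined on pure
tensors by `φ ⊗ m ↦ (e ↦ ((φ e).1 ⊗ m, (φ e).2 ⊗ m))`. -/
noncomputable def flowsTensorCompare (F : CellSheaf S V E s t) [Fintype E]
    (M : Type) [AddCommMonoid M] [Module S M] :
    (↥(Flows F) ⊗[S] M) →ₗ[S]
      (∀ e, (F.FV (s e) ⊗[S] M) × (F.FV (t e) ⊗[S] M)) :=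
  LinearMap.pi fun e =>
    (LinearMap.rTensor M (flowProjFst F e)).prod
      (LinearMap.rTensor M (flowProjSnd F e))

/-! ### Coordinates on the tensor product of a finite product -/

/-- In a tensor product `(∏ i, C i) ⊗ M` over a finite index type, elements are determined by their
coordinates: the identity of the product is `∑ i, ι_i ∘ π_i`. -/
theorem rTensor_pi_ext {ι : Type} [Fintype ι] {C : ι → Type} [∀ i, AddCommMonoid (C i)]
    [∀ i, Module S (C i)] (M : Type) [AddCommMonoid M] [Module S M]
    {x y : (∀ i, C i) ⊗[S] M}
    (h : ∀ i, LinearMap.rTensor M (LinearMap.proj i : (∀ i, C i) →ₗ[S] C i) x =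
      LinearMap.rTensor M (LinearMap.proj i : (∀ i, C i) →ₗ[S] C i) y) : x = y := by
  classical
  have key : ∀ z : (∀ i, C i) ⊗[S] M,
      ∑ i, LinearMap.rTensor M (LinearMap.single S C i)
        (LinearMap.rTensor M (LinearMap.proj i : (∀ i, C i) →ₗ[S] C i) z) = z := by
    intro z
    induction z with
    | zero => simp
    | add a b ha hb => simp only [map_add, Finset.sum_add_distrib, ha, hb]
    | tmul c m =>
      simp only [LinearMap.rTensor_tmul, ← TensorProduct.sum_tmul]
      congr 1
      simpa using Finset.univ_sum_single c
  rw [← key x, ← key y]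
  simp only [h]

theorem rTensor_prod_ext {C D : Type} [AddCommMonoid C] [AddCommMonoid D] [Module S C]
    [Module S D] (M : Type) [AddCommMonoid M] [Module S M] {x y : (C × D) ⊗[S] M}
    (h₁ : LinearMap.rTensor M (LinearMap.fst S C D) x = LinearMap.rTensor M (LinearMap.fst S C D) y)
    (h₂ : LinearMap.rTensor M (LinearMap.snd S C D) x =
      LinearMap.rTensor M (LinearMap.snd S C D) y) : x = y := by
  have key : ∀ z : (C × D) ⊗[S] M,
      LinearMap.rTensor M (LinearMap.inl S C D) (LinearMap.rTensor M (LinearMap.fst S C D) z) +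
      LinearMap.rTensor M (LinearMap.inr S C D) (LinearMap.rTensor M (LinearMap.snd S C D) z)
        = z := by
    intro z
    induction z with
    | zero => simp
    | add a b ha hb =>
      simp only [map_add]
      rw [add_add_add_comm, ha, hb]
    | tmul c m => simp [← TensorProduct.add_tmul]
  rw [← key x, ← key y, h₁, h₂]

/-- Flatness speaks of submodules of the literal form `LinearMap.eqLocus f g`; this transports its
conclusion to a submodule that is only provably equal to one. -/
theorem flat_inclusion_of_eq {M : Type} [AddCommMonoid M] [Module S M]
    {A : Type} [AddCommMonoid A] [Module S A] {P Q : Submodule S A} (h : P = Q) {R : Set (A ⊗[S] M)}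
    (hQ : Function.Injective ⇑(LinearMap.rTensor M Q.subtype) ∧
      Set.range ⇑(LinearMap.rTensor M Q.subtype) = R) :
    Function.Injective ⇑(LinearMap.rTensor M P.subtype) ∧
      Set.range ⇑(LinearMap.rTensor M P.subtype) = R := by
  subst h
  exact hQ

/-! ### Flows as a single equalizer -/

/-- The map to `(∏_e F_E(e)) × (∏_v F_V(v))` with given edge and vertex components; for the two
choices of components occurring in the definition of a flow, its equalizer is `Flows F`. -/
def edgeVertexMap (F : CellSheaf S V E s t)
    (p : ∀ e, (∀ e, F.FV (s e) × F.FV (t e)) →ₗ[S] F.FE e)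
    (q : ∀ v, (∀ e, F.FV (s e) × F.FV (t e)) →ₗ[S] F.FV v) :
    (∀ e, F.FV (s e) × F.FV (t e)) →ₗ[S] (∀ e, F.FE e) × (∀ v, F.FV v) :=
  (LinearMap.pi p).prod (LinearMap.pi q)

/-- The projection `φ ↦ (φ e).1` on arbitrary families. -/
def famFst (F : CellSheaf S V E s t) (e : E) :
    (∀ e, F.FV (s e) × F.FV (t e)) →ₗ[S] F.FV (s e) :=
  (LinearMap.fst S (F.FV (s e)) (F.FV (t e))).comp (LinearMap.proj e)

/-- The projection `φ ↦ (φ e).2` on arbitrary families. -/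
def famSnd (F : CellSheaf S V E s t) (e : E) :
    (∀ e, F.FV (s e) × F.FV (t e)) →ₗ[S] F.FV (t e) :=
  (LinearMap.snd S (F.FV (s e)) (F.FV (t e))).comp (LinearMap.proj e)

theorem flows_eq_eqLocus (F : CellSheaf S V E s t) [Fintype E] :
    Flows F = LinearMap.eqLocus
      (edgeVertexMap F (fun e => (F.rneg e).comp (famFst F e)) (inflowMap F))
      (edgeVertexMap F (fun e => (F.rpos e).comp (famSnd F e)) (outflowMap F)) := by
  ext φ
  simp only [Flows, Submodule.mem_inf, Submodule.mem_iInf, LinearMap.mem_eqLocus]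
  exact (and_congr funext_iff funext_iff).symm.trans Prod.mk_inj.symm

theorem mem_flows_iff (F : CellSheaf S V E s t) [Fintype E]
    (φ : ∀ e, F.FV (s e) × F.FV (t e)) :
    φ ∈ Flows F ↔ (∀ e, F.rneg e (φ e).1 = F.rpos e (φ e).2) ∧
      ∀ v, inflowMap F v φ = outflowMap F v φ := by
  simp [Flows, Submodule.mem_inf, Submodule.mem_iInf, LinearMap.mem_eqLocus]

/-- Equality after tensoring can be tested on each edge and vertex component of the target. Here
the target is a finite product because `V` and `E` are finite. -/
theorem rTensor_edgeVertexMap_eq_iff [Fintype V] [Fintype E] (F : CellSheaf S V E s t)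
    (M : Type) [AddCommMonoid M] [Module S M]
    (p p' : ∀ e, (∀ e, F.FV (s e) × F.FV (t e)) →ₗ[S] F.FE e)
    (q q' : ∀ v, (∀ e, F.FV (s e) × F.FV (t e)) →ₗ[S] F.FV v)
    (x : (∀ e, F.FV (s e) × F.FV (t e)) ⊗[S] M) :
    LinearMap.rTensor M (edgeVertexMap F p q) x = LinearMap.rTensor M (edgeVertexMap F p' q') x ↔
      (∀ e, LinearMap.rTensor M (p e) x = LinearMap.rTensor M (p' e) x) ∧
      ∀ v, LinearMap.rTensor M (q v) x = LinearMap.rTensor M (q' v) x := by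
  -- Each component of `edgeVertexMap` factors through it by a projection of the target.
  have hp : ∀ p q e, p e = (LinearMap.proj e).comp
      ((LinearMap.fst S _ _).comp (edgeVertexMap F p q)) := fun _ _ _ => rfl
  have hq : ∀ p q v, q v = (LinearMap.proj v).comp
      ((LinearMap.snd S _ _).comp (edgeVertexMap F p q)) := fun _ _ _ => rfl
  constructor
  · intro h
    refine ⟨fun e => ?_, fun v => ?_⟩
    · rw [hp p q e, hp p' q' e]
      simp only [LinearMap.rTensor_comp_apply, h]
    · rw [hq p q v, hq p' q' v]
      simp only [LinearMap.rTensor_comp_apply, h]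
  · rintro ⟨h₁, h₂⟩
    apply rTensor_prod_ext
    · apply rTensor_pi_ext
      intro e
      have := h₁ e
      rw [hp p q e, hp p' q' e] at this
      simpa only [LinearMap.rTensor_comp_apply] using this
    · apply rTensor_pi_ext
      intro v
      have := h₂ v
      rw [hq p q v, hq p' q' v] at this
      simpa only [LinearMap.rTensor_comp_apply] using this

/-! ### Splitting the tensor product of the space of families -/

/-- The canonical map from `(∏_e F_V(s e) × F_V(t e)) ⊗ M` to
`∏_e (F_V(s e) ⊗ M) × (F_V(t e) ⊗ M)`. -/
noncomputable def tensorSplit (F : CellSheaf S V E s t) (M : Type) [AddCommMonoid M] [Module S M] :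
    ((∀ e, F.FV (s e) × F.FV (t e)) ⊗[S] M) →ₗ[S]
      (∀ e, (F.FV (s e) ⊗[S] M) × (F.FV (t e) ⊗[S] M)) :=
  LinearMap.pi fun e =>
    (LinearMap.rTensor M (famFst F e)).prod (LinearMap.rTensor M (famSnd F e))

theorem tensorSplit_injective [Fintype E] (F : CellSheaf S V E s t) (M : Type) [AddCommMonoid M]
    [Module S M] : Function.Injective (tensorSplit F M) := by
  intro x y h
  apply rTensor_pi_ext
  intro e
  have he := congrFun h e
  apply rTensor_prod_ext
  · have h' : LinearMap.rTensor M (famFst F e) x = LinearMap.rTensor M (famFst F e) y :=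
      congrArg Prod.fst he
    simpa only [famFst, LinearMap.rTensor_comp_apply] using h'
  · have h' : LinearMap.rTensor M (famSnd F e) x = LinearMap.rTensor M (famSnd F e) y :=
      congrArg Prod.snd he
    simpa only [famSnd, LinearMap.rTensor_comp_apply] using h'

theorem tensorSplit_surjective [Fintype E] (F : CellSheaf S V E s t) (M : Type) [AddCommMonoid M]
    [Module S M] : Function.Surjective (tensorSplit F M) := by
  classical
  let C : E → Type := fun e => F.FV (s e) × F.FV (t e)
  -- `h₁` and `h₂` give tensors whose image is concentrated in one coordinate of one edge; the
  -- preimage of an arbitrary family is a sum of these.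
  have h₁ : ∀ (e : E) (z : F.FV (s e) ⊗[S] M),
      tensorSplit F M (LinearMap.rTensor M
        ((LinearMap.single S C e).comp (LinearMap.inl S (F.FV (s e)) (F.FV (t e)))) z) =
      Pi.single e (z, 0) := by
    intro e z
    ext e' : 1
    by_cases h : e' = e
    · subst h
      ext
      · have : (famFst F e').comp ((LinearMap.single S C e').comp (LinearMap.inl S _ _)) =
            LinearMap.id := by ext; simp [famFst, C]
        simp [tensorSplit, ← LinearMap.rTensor_comp_apply, this]
      · have : (famSnd F e').comp ((LinearMap.single S C e').comp (LinearMap.inl S _ _)) = 0 := by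
          ext; simp [famSnd, C]
        simp [tensorSplit, ← LinearMap.rTensor_comp_apply, this]
    · have : (famFst F e').comp ((LinearMap.single S C e).comp (LinearMap.inl S _ _)) = 0 := by
        ext; simp [famFst, h]
      have : (famSnd F e').comp ((LinearMap.single S C e).comp (LinearMap.inl S _ _)) = 0 := by
        ext; simp [famSnd, h]
      simp [tensorSplit, ← LinearMap.rTensor_comp_apply, *]
  have h₂ : ∀ (e : E) (z : F.FV (t e) ⊗[S] M),
      tensorSplit F M (LinearMap.rTensor M
        ((LinearMap.single S C e).comp (LinearMap.inr S (F.FV (s e)) (F.FV (t e)))) z) =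
      Pi.single e (0, z) := by
    intro e z
    ext e' : 1
    by_cases h : e' = e
    · subst h
      ext
      · have : (famFst F e').comp ((LinearMap.single S C e').comp (LinearMap.inr S _ _)) = 0 := by
          ext; simp [famFst, C]
        simp [tensorSplit, ← LinearMap.rTensor_comp_apply, this]
      · have : (famSnd F e').comp ((LinearMap.single S C e').comp (LinearMap.inr S _ _)) =
            LinearMap.id := by ext; simp [famSnd, C]
        simp [tensorSplit, ← LinearMap.rTensor_comp_apply, this]
    · have : (famFst F e').comp ((LinearMap.single S C e).comp (LinearMap.inr S _ _)) = 0 := by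
        ext; simp [famFst, h]
      have : (famSnd F e').comp ((LinearMap.single S C e).comp (LinearMap.inr S _ _)) = 0 := by
        ext; simp [famSnd, h]
      simp [tensorSplit, ← LinearMap.rTensor_comp_apply, *]
  intro ψ
  refine ⟨∑ e, (LinearMap.rTensor M
        ((LinearMap.single S C e).comp (LinearMap.inl S (F.FV (s e)) (F.FV (t e)))) (ψ e).1 +
      LinearMap.rTensor M
        ((LinearMap.single S C e).comp (LinearMap.inr S (F.FV (s e)) (F.FV (t e)))) (ψ e).2), ?_⟩
  simp only [map_sum, map_add, h₁, h₂, ← Pi.single_add, Prod.mk_add_mk, add_zero, zero_add]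
  exact Finset.univ_sum_single ψ

/-! ### Flows for the tensored sheaf -/

theorem castLin_tensorSheaf (F : CellSheaf S V E s t) (M : Type) [AddCommMonoid M]
    [Module S M] {v w : V} (h : v = w) :
    castLin (tensorSheaf F M) h = LinearMap.rTensor M (castLin F h) := by
  subst h
  exact (LinearMap.rTensor_id M _).symm

theorem inflowMap_tensorSplit [Fintype E] (F : CellSheaf S V E s t) (M : Type) [AddCommMonoid M]
    [Module S M] (v : V) (x : (∀ e, F.FV (s e) × F.FV (t e)) ⊗[S] M) :
    inflowMap (tensorSheaf F M) v (tensorSplit F M x) =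
      LinearMap.rTensor M (inflowMap F v) x := by
  have hsum : LinearMap.rTensor M (inflowMap F v) = _ := map_sum (LinearMap.rTensorHom M) _ _
  rw [hsum, LinearMap.sum_apply]
  refine (LinearMap.sum_apply _ _ _).trans ?_
  refine Finset.sum_congr rfl fun e _ => ?_
  split_ifs with h
  · rw [castLin_tensorSheaf]
    exact (LinearMap.rTensor_comp_apply M (castLin F h) (famFst F e) x).symm
  · rw [map_zero]
    rfl

theorem outflowMap_tensorSplit [Fintype E] (F : CellSheaf S V E s t) (M : Type) [AddCommMonoid M]
    [Module S M] (v : V) (x : (∀ e, F.FV (s e) × F.FV (t e)) ⊗[S] M) :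
    outflowMap (tensorSheaf F M) v (tensorSplit F M x) =
      LinearMap.rTensor M (outflowMap F v) x := by
  have hsum : LinearMap.rTensor M (outflowMap F v) = _ := map_sum (LinearMap.rTensorHom M) _ _
  rw [hsum, LinearMap.sum_apply]
  refine (LinearMap.sum_apply _ _ _).trans ?_
  refine Finset.sum_congr rfl fun e _ => ?_
  split_ifs with h
  · rw [castLin_tensorSheaf]
    exact (LinearMap.rTensor_comp_apply M (castLin F h) (famSnd F e) x).symm
  · rw [map_zero]
    rfl

/-- Under `tensorSplit`, the equalizer of the two tensored maps corresponds to the flows for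
`F ⊗ M`. -/
theorem tensorSplit_mem_flows_iff [Fintype V] [Fintype E] (F : CellSheaf S V E s t) (M : Type)
    [AddCommMonoid M] [Module S M] (x : (∀ e, F.FV (s e) × F.FV (t e)) ⊗[S] M) :
    tensorSplit F M x ∈ Flows (tensorSheaf F M) ↔
      LinearMap.rTensor M
        (edgeVertexMap F (fun e => (F.rneg e).comp (famFst F e)) (inflowMap F)) x =
      LinearMap.rTensor M
        (edgeVertexMap F (fun e => (F.rpos e).comp (famSnd F e)) (outflowMap F)) x := by
  rw [rTensor_edgeVertexMap_eq_iff]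
  refine (mem_flows_iff (tensorSheaf F M) _).trans (and_congr ?_ ?_)
  · refine forall_congr' fun e => ?_
    rw [LinearMap.rTensor_comp_apply, LinearMap.rTensor_comp_apply]
    rfl
  · refine forall_congr' fun v => ?_
    rw [inflowMap_tensorSplit, outflowMap_tensorSplit]
    rfl

theorem flowsTensorCompare_eq [Fintype E] (F : CellSheaf S V E s t) (M : Type)
    [AddCommMonoid M] [Module S M] (x : ↥(Flows F) ⊗[S] M) :
    flowsTensorCompare F M x =
      tensorSplit F M (LinearMap.rTensor M (Flows F).subtype x) := by
  ext e : 1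
  ext
  · exact LinearMap.rTensor_comp_apply M (famFst F e) (Flows F).subtype x
  · exact LinearMap.rTensor_comp_apply M (famSnd F e) (Flows F).subtype x


/-- universal coefficients for flows: for a commutative semiring
`S`, a finite digraph `X` without self-loops, a cellular sheaf `F` of
`S`-semimodules on `X`, and a flat `S`-semimodule `M`, the canonical map
`Flows(X;F) ⊗[S] M → Flows(X; F ⊗ M)`, determined on pure tensors by
`φ ⊗ m ↦ (e ↦ ((φ e).1 ⊗ m, (φ e).2 ⊗ m))`, is bijective. -/
theorem flows_tensor_flat_equiv [Fintype V] [Fintype E]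
    (F : CellSheaf S V E s t) (hnl : ∀ e : E, s e ≠ t e)
    (M : Type) [AddCommMonoid M] [Module S M]
    (hM : ∀ (A B : Type) [AddCommMonoid A] [AddCommMonoid B]
        [Module S A] [Module S B] (f g : A →ₗ[S] B),
        Function.Injective
          ⇑(LinearMap.rTensor M (LinearMap.eqLocus f g).subtype) ∧
        Set.range ⇑(LinearMap.rTensor M (LinearMap.eqLocus f g).subtype) =
          {x : A ⊗[S] M |
            LinearMap.rTensor M f x = LinearMap.rTensor M g x}) :
    (∀ (φ : ↥(Flows F)) (m : M) (e : E),
        flowsTensorCompare F M (φ ⊗ₜ[S] m) e =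
          (((φ : ∀ e, F.FV (s e) × F.FV (t e)) e).1 ⊗ₜ[S] m,
           ((φ : ∀ e, F.FV (s e) × F.FV (t e)) e).2 ⊗ₜ[S] m)) ∧
    Function.Injective ⇑(flowsTensorCompare F M) ∧
    Set.range ⇑(flowsTensorCompare F M) =
      {ψ : ∀ e, (F.FV (s e) ⊗[S] M) × (F.FV (t e) ⊗[S] M) |
        ψ ∈ Flows (tensorSheaf F M)} := by
  obtain ⟨hinj, hrange⟩ := flat_inclusion_of_eq (flows_eq_eqLocus F) (hM _ _ _ _)
  have hcomp : ⇑(flowsTensorCompare F M) =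
      tensorSplit F M ∘ LinearMap.rTensor M (Flows F).subtype :=
    funext (flowsTensorCompare_eq F M)
  refine ⟨fun φ m e => rfl, ?_, ?_⟩
  · rw [hcomp]
    exact (tensorSplit_injective F M).comp hinj
  · rw [hcomp, Set.range_comp, hrange]
    ext ψ
    obtain ⟨x, rfl⟩ := tensorSplit_surjective F M ψ
    rw [(tensorSplit_injective F M).mem_set_image]
    exact (tensorSplit_mem_flows_iff F M x).symm
end UCT
end
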